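/- arXiv:1309.7734 — 4 statements merged into one kernel-verified Lean document; each statement's English description precedes it below -/
import Mathlib

section
/- Let r ≥ 2 be an even integer with gcd(r,3)=1, n = 3r, and let d = 3^r + 2 or d = 3^{2r} + 2. As z ranges over GF(3^n), the Weil sum S_d(z) takes the value 0 exactly (3^{3r}+3^{2r})/2 - 3^r times, the value 3^{2r} exactly 3^r times, the value 3^{3r/2} exactly (3^{3r-1}-3^{2r-1})/2 times, the value -3^{3r/2} exactly (3^{3r-1}-3^{2r-1})/2 times, the value 2·3^{3r/2} exactly (3^{3r-1}-3^{2r-1})/4 times, and the value -2·3^{3r/2} exactly (3^{3r-1}-3^{2r-1})/4 times. -/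
noncomputable instance (p n : ℕ) [Fact p.Prime] : Fintype (GaloisField p n) :=
  Fintype.ofFinite _

/-- The Weil sum `S_d(z) = ∑_{x ∈ GF(3^n)} ω^{Tr(zx - x^d)}`, where `ω = e^{2πi/3}`
and `Tr` is the absolute trace from `GF(3^n)` to `GF(3)`. -/
noncomputable def ternaryWeilSum (n d : ℕ) (z : GaloisField 3 n) : ℂ :=
  ∑ x : GaloisField 3 n,
    Complex.exp (2 * Real.pi * Complex.I / 3) ^
      (Algebra.trace (ZMod 3) (GaloisField 3 n) (z * x - x ^ d)).val

/-!
Put `L = GF(3^r)` and `K = GF(3^(3r))`. The decimation is `x ^ d = x ^ 2 * σ x`, where `σ`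
generates the Galois group of the cyclic cubic extension `K / L`. Additive Hilbert 90 gives
`θ ∈ K` with `σ θ = θ + 1`, and for `x = a + b θ - c θ ^ 2` the trace of `z x - x ^ 2 σ x` to `L` is
`a (u - c ^ 2) + v b - w c + b ^ 3 - b ^ 2 c - b c ^ 2 + κ c ^ 3`, where `(u, v, w)` are linear
coordinates of `z`. Let `ψ` be the canonical character of `L`, `q = 3^r` and `G` the quadratic
Gauss sum of `ψ`. Summing over `a` forces `c ^ 2 = u`, and since `ψ (b ^ 3) = ψ b` the sum over `b`
is a quadratic Gauss sum. For `u = c ^ 2 ≠ 0` the two roots together contribute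
`± q G (ψ y + ψ (-y))` with `ψ y + ψ (-y) ∈ {2, -1}`, and `y` is equidistributed because it is
affine in `w`.
-/

open Finset

section QuadraticGaussSum

variable {F : Type*} [Field F] [Fintype F] [DecidableEq F]

lemma sum_comp_sq {M : Type*} [AddCommGroup M] (hF : ringChar F ≠ 2) (f : F → M) :
    ∑ b, f (b ^ 2) = ∑ y, (quadraticChar F y + 1) • f y := by
  rw [← sum_fiberwise univ (fun b : F ↦ b ^ 2)]
  refine sum_congr rfl fun y _ ↦ ?_
  rw [← quadraticChar_card_sqrts hF y, natCast_zsmul, Set.toFinset_ofPred]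
  exact sum_eq_card_nsmul fun b hb ↦ by rw [(mem_filter.mp hb).2]

omit [DecidableEq F] in
lemma two_mul_sum_eq_sum_comp_sq (hF : ringChar F ≠ 2) {f : F → ℕ} (f_zero : f 0 = 0)
    (f_not_square : ∀ u, ¬ IsSquare u → f u = 0) : 2 * ∑ u, f u = ∑ b, f (b ^ 2) := by
  classical
  have double := sum_comp_sq hF (fun u ↦ (f u : ℤ))
  have weight (u : F) : (quadraticChar F u + 1) • (f u : ℤ) = 2 * f u := by
    rcases eq_or_ne u 0 with rfl | hu
    · simp [f_zero]
    by_cases square : IsSquare u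
    · rw [(quadraticChar_one_iff_isSquare hu).mpr square, one_add_one_eq_two, smul_eq_mul]
    · simp [f_not_square u square]
  simp only [weight, ← mul_sum] at double
  exact_mod_cast double.symm

lemma two_mul_ncard_quadraticChar_eq_add_one (hF : ringChar F ≠ 2) {e : ℤ}
    (he : e = 1 ∨ e = -1) :
    2 * {c : F | quadraticChar F c = e}.ncard + 1 = Fintype.card F := by
  have indicator (c : F) : (2 * if quadraticChar F c = e then 1 else 0 : ℤ)
      = e * quadraticChar F c + (1 - if c = 0 then 1 else 0) := by
    rcases eq_or_ne c 0 with rfl | hc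
    · rcases he with rfl | rfl <;> simp
    · rcases quadraticChar_dichotomy hc with h | h <;> rcases he with rfl | rfl <;> simp [h, hc]
  have key := sum_congr rfl fun c (_ : c ∈ univ) ↦ indicator c
  rw [← mul_sum, ← natCast_card_filter, sum_add_distrib, ← mul_sum, quadraticChar_sum_zero hF,
    sum_sub_distrib, Fintype.sum_ite_eq', sum_const, nsmul_one, card_univ] at key
  rw [Set.ncard_eq_toFinset_card', Set.toFinset_ofPred]
  omega

variable {R : Type*} [CommRing R]

/-- The quadratic Gauss sum `∑ y, χ y * ψ y` of an additive character `ψ`, where `χ` is the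
quadratic character with values in the target ring of `ψ`. -/
noncomputable def quadraticGaussSum (ψ : AddChar F R) : R :=
  gaussSum ((quadraticChar F).ringHomComp (Int.castRingHom R)) ψ

variable [IsDomain R] {ψ : AddChar F R}

lemma sum_addChar_mul (hψ : ψ ≠ 1) (u : F) :
    ∑ a, ψ (a * u) = if u = 0 then (Fintype.card F : R) else 0 := by
  rw [AddChar.sum_mulShift u (AddChar.IsPrimitive.of_ne_one hψ), Nat.cast_ite, Nat.cast_zero]

lemma sum_addChar_mul_sq (hF : ringChar F ≠ 2) (hψ : ψ ≠ 1) {c : F} (hc : c ≠ 0) :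
    ∑ b, ψ (c * b ^ 2) = quadraticChar F c * quadraticGaussSum ψ := by
  have character_sum : ∑ y, ψ (c * y) = 0 := by
    simpa only [mul_comm, hc, if_false] using sum_addChar_mul hψ c
  have chi_sq : (quadraticChar F c : R) * quadraticChar F c = 1 := by
    rw [← Int.cast_mul, ← sq, quadraticChar_sq_one hc, Int.cast_one]
  have shift : (quadraticChar F c : R) * ∑ y, quadraticChar F y * ψ (c * y)
      = quadraticGaussSum ψ :=
    gaussSum_mulShift ((quadraticChar F).ringHomComp (Int.castRingHom R)) ψ (Units.mk0 c hc)
  rw [sum_comp_sq hF (fun y ↦ ψ (c * y))]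
  simp only [zsmul_eq_mul, Int.cast_add, Int.cast_one, add_mul, one_mul, sum_add_distrib]
  rw [character_sum, add_zero, ← shift, ← mul_assoc, chi_sq, one_mul]

lemma sum_addChar_quadratic (hF : ringChar F ≠ 2) (hψ : ψ ≠ 1) {c : F} (hc : c ≠ 0) (m : F) :
    ∑ b, ψ (c * b ^ 2 + m * b)
      = quadraticChar F c * quadraticGaussSum ψ * ψ (-(m ^ 2 / (4 * c))) := by
  have two_ne : (2 : F) ≠ 0 := Ring.two_ne_zero hF
  have complete_square (b : F) :
      c * b ^ 2 + m * b = c * (b + m / (2 * c)) ^ 2 + -(m ^ 2 / (4 * c)) := by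
    rw [show (4 : F) = 2 ^ 2 by norm_num]
    field_simp
    ring
  simp only [complete_square, AddChar.map_add_eq_mul, ← sum_mul]
  rw [← sum_addChar_mul_sq hF hψ hc,
    ← Equiv.sum_comp (Equiv.addRight (m / (2 * c))) (fun b ↦ ψ (c * b ^ 2))]
  rfl

lemma quadraticChar_neg (h4 : Fintype.card F % 4 = 1) (c : F) :
    quadraticChar F (-c) = quadraticChar F c := by
  have isSquare_neg_one : IsSquare (-1 : F) := FiniteField.isSquare_neg_one_iff.mpr (by omega)
  rw [neg_eq_neg_one_mul, map_mul,
    (quadraticChar_one_iff_isSquare (neg_ne_zero.mpr one_ne_zero)).mpr isSquare_neg_one, one_mul]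

lemma quadraticGaussSum_sq [CharZero R] (hF : ringChar F ≠ 2) (h4 : Fintype.card F % 4 = 1)
    (hψ : ψ ≠ 1) :
    quadraticGaussSum ψ ^ 2 = Fintype.card F := by
  have chi_ne_one : (quadraticChar F).ringHomComp (Int.castRingHom R) ≠ 1 :=
    (MulChar.ringHomComp_ne_one_iff Int.cast_injective).mpr (quadraticChar_ne_one hF)
  have chi_neg_one : (quadraticChar F).ringHomComp (Int.castRingHom R) (-1) = 1 := by
    rw [MulChar.ringHomComp_apply, quadraticChar_neg h4, map_one, map_one]
  rw [quadraticGaussSum, gaussSum_sq chi_ne_one ((quadraticChar_isQuadratic F).comp _)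
    (AddChar.IsPrimitive.of_ne_one hψ), chi_neg_one, one_mul]

end QuadraticGaussSum

section CharThree

variable {F : Type*} [Field F] [CharP F 3]

variable (F) in
lemma ringChar_ne_two_of_charP_three : ringChar F ≠ 2 := by
  rw [ringChar.eq F 3]
  norm_num

lemma addChar_add_neg_of_charP_three {R : Type*} [CommRing R] [IsDomain R] (ψ : AddChar F R)
    (y : F) : ψ y + ψ (-y) = 2 ∨ ψ y + ψ (-y) = -1 := by
  have cube : ψ y ^ 3 = 1 := by
    rw [← AddChar.map_nsmul_eq_pow, nsmul_eq_mul, CharP.cast_eq_zero, zero_mul,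
      AddChar.map_zero_eq_one]
  have neg : ψ (-y) = ψ y ^ 2 := by
    rw [← AddChar.map_nsmul_eq_pow]
    congr 1
    grind
  have factored : (ψ y - 1) * (ψ y + ψ y ^ 2 + 1) = 0 := by linear_combination cube
  rw [neg]
  rcases mul_eq_zero.mp factored with h | h
  · exact Or.inl (by rw [sub_eq_zero.mp h]; norm_num)
  · exact Or.inr (eq_neg_of_add_eq_zero_left h)

lemma three_mul_ncard_addChar_add_neg_eq [Fintype F] {R : Type*} [CommRing R] [IsDomain R]
    [CharZero R] {ψ : AddChar F R} (hψ : ψ ≠ 1) {m : ℤ} (hm : m = 2 ∨ m = -1) :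
    3 * m.natAbs * {y : F | ψ y + ψ (-y) = m}.ncard = 2 * Fintype.card F := by
  classical
  have sum_zero : ∑ y, (ψ y + ψ (-y)) = 0 := by
    have sum_neg : ∑ y, ψ (-y) = ∑ y, ψ y := Equiv.sum_comp (Equiv.neg F) ψ
    rw [sum_add_distrib, sum_neg, AddChar.sum_eq_zero_of_ne_one hψ, add_zero]
  have indicator (y : F) : 3 * (m.natAbs : R) * (if ψ y + ψ (-y) = m then 1 else 0)
      = m * (ψ y + ψ (-y)) + 2 := by
    rcases addChar_add_neg_of_charP_three ψ y with h | h <;> rcases hm with rfl | rfl <;>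
      rw [h] <;> norm_num
  have key := sum_congr rfl fun y (_ : y ∈ univ) ↦ indicator y
  rw [← mul_sum, ← natCast_card_filter, sum_add_distrib, ← mul_sum, sum_zero, mul_zero, zero_add,
    sum_const, card_univ, nsmul_eq_mul, mul_comm (Fintype.card F : R)] at key
  rw [Set.ncard_eq_toFinset_card', Set.toFinset_ofPred]
  exact_mod_cast key

end CharThree

section CubicSum

variable {F : Type*} [Field F] [Fintype F] {R : Type*} [CommRing R] [IsDomain R] {ψ : AddChar F R}

/-- The triple exponential sum to which the Weil sum reduces in coordinates over the cubic
subfield; `u`, `v`, `w` are the coordinates of the frequency and `κ` is the coefficient of `c ^ 3`,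
which affects no value count. -/
def cubicSum (ψ : AddChar F R) (κ u v w : F) : R :=
  ∑ c, ∑ b, ∑ a, ψ (a * (u - c ^ 2) + (v * b - w * c + (b ^ 3 - b ^ 2 * c - b * c ^ 2 + κ * c ^ 3)))

/-- The argument of `ψ` left after completing the square in `b` at a root `c` of `u = c ^ 2`
in `cubicSum ψ κ u v w`. -/
def cubicPhase (κ c v w : F) : F := (v + 1 - c ^ 2) ^ 2 / c - w * c + κ * c ^ 3

lemma cubicSum_eq_sum_sqrt [DecidableEq F] (hψ : ψ ≠ 1) (hfrob : ∀ x, ψ (x ^ 3) = ψ x)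
    (κ u v w : F) :
    cubicSum ψ κ u v w = Fintype.card F * ∑ c with c ^ 2 = u,
      (∑ b, ψ (-c * b ^ 2 + (v + 1 - c ^ 2) * b)) * ψ (κ * c ^ 3 - w * c) := by
  have split (a b c : F) :
      ψ (a * (u - c ^ 2) + (v * b - w * c + (b ^ 3 - b ^ 2 * c - b * c ^ 2 + κ * c ^ 3)))
        = ψ (a * (u - c ^ 2)) *
          (ψ (-c * b ^ 2 + (v + 1 - c ^ 2) * b) * ψ (κ * c ^ 3 - w * c)) := by
    have cube_free : ψ (v * b - w * c + (b ^ 3 - b ^ 2 * c - b * c ^ 2 + κ * c ^ 3))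
        = ψ (v * b - w * c + (b - b ^ 2 * c - b * c ^ 2 + κ * c ^ 3)) := by
      rw [show v * b - w * c + (b ^ 3 - b ^ 2 * c - b * c ^ 2 + κ * c ^ 3)
          = b ^ 3 + (v * b - w * c - b ^ 2 * c - b * c ^ 2 + κ * c ^ 3) by ring,
        AddChar.map_add_eq_mul, hfrob, ← AddChar.map_add_eq_mul]
      congr 1
      ring
    rw [AddChar.map_add_eq_mul, cube_free, ← AddChar.map_add_eq_mul ψ (-c * b ^ 2 + _)]
    congr 2
    ring
  simp only [cubicSum, split, ← sum_mul, sum_addChar_mul hψ, ← mul_sum, sub_eq_zero]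
  rw [mul_sum, sum_filter]
  refine sum_congr rfl fun c _ ↦ ?_
  simp only [eq_comm (a := u), ite_mul, zero_mul]

lemma cubicSum_zero_left [DecidableEq F] (hψ : ψ ≠ 1) (hfrob : ∀ x, ψ (x ^ 3) = ψ x)
    (κ v w : F) :
    cubicSum ψ κ 0 v w = if v = -1 then (Fintype.card F : R) ^ 2 else 0 := by
  have root_zero : ({c : F | c ^ 2 = 0} : Finset F) = {0} := by
    ext c
    simp
  have linear (b : F) : -0 * b ^ 2 + (v + 1 - 0 ^ 2) * b = b * (v + 1) := by ring
  rw [cubicSum_eq_sum_sqrt hψ hfrob, root_zero, sum_singleton]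
  simp only [linear, sum_addChar_mul hψ, eq_neg_iff_add_eq_zero]
  split_ifs <;> simp [sq]

lemma cubicSum_of_not_isSquare (hψ : ψ ≠ 1) (hfrob : ∀ x, ψ (x ^ 3) = ψ x) {u : F}
    (hu : ¬ IsSquare u) (κ v w : F) : cubicSum ψ κ u v w = 0 := by
  classical
  have no_root : ({c : F | c ^ 2 = u} : Finset F) = ∅ :=
    filter_eq_empty_iff.mpr fun c _ hc ↦ hu ⟨c, by rw [← hc, sq]⟩
  rw [cubicSum_eq_sum_sqrt hψ hfrob, no_root, sum_empty, mul_zero]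

lemma cubicSum_sq [CharP F 3] [DecidableEq F] (h4 : Fintype.card F % 4 = 1) (hψ : ψ ≠ 1)
    (hfrob : ∀ x, ψ (x ^ 3) = ψ x) {c : F} (hc : c ≠ 0) (κ v w : F) :
    cubicSum ψ κ (c ^ 2) v w = Fintype.card F * quadraticGaussSum ψ * quadraticChar F c *
      (ψ (cubicPhase κ c v w) + ψ (-cubicPhase κ c v w)) := by
  have hF := ringChar_ne_two_of_charP_three F
  have root_contribution {x : F} (hx : x ≠ 0) :
      (∑ b, ψ (-x * b ^ 2 + (v + 1 - x ^ 2) * b)) * ψ (κ * x ^ 3 - w * x)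
        = quadraticChar F x * quadraticGaussSum ψ * ψ (cubicPhase κ x v w) := by
    rw [sum_addChar_quadratic hF hψ (neg_ne_zero.mpr hx), quadraticChar_neg h4, mul_assoc,
      ← AddChar.map_add_eq_mul]
    congr 2
    rw [cubicPhase, show (4 : F) = 1 by grind]
    ring
  have c_ne_neg : c ≠ -c := fun h ↦ hc (by grind)
  have roots : ({x : F | x ^ 2 = c ^ 2} : Finset F) = {c, -c} := by
    ext x
    simp [sq_eq_sq_iff_eq_or_eq_neg]
  have phase_neg : cubicPhase κ (-c) v w = -cubicPhase κ c v w := by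
    simp only [cubicPhase]
    ring
  rw [cubicSum_eq_sum_sqrt hψ hfrob, roots, sum_pair c_ne_neg, root_contribution hc,
    root_contribution (neg_ne_zero.mpr hc), quadraticChar_neg h4, phase_neg]
  ring

end CubicSum

section ValueCounts

lemma ncard_setOf_prod {α β : Type*} [Fintype α] [Finite β] (P : α → β → Prop) :
    {p : α × β | P p.1 p.2}.ncard = ∑ a, {b | P a b}.ncard := by
  simp only [← Nat.card_coe_set_eq]
  rw [← Nat.card_sigma]
  exact Nat.card_congr (Equiv.subtypeProdEquivSigmaSubtype P)

variable {F : Type*} [Field F] [Fintype F]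

lemma ncard_setOf_cubicPhase_mem (κ : F) {c : F} (hc : c ≠ 0) (s : Set F) :
    {p : F × F | cubicPhase κ c p.1 p.2 ∈ s}.ncard = Fintype.card F * s.ncard := by
  have slice (v : F) : {w | cubicPhase κ c v w ∈ s}.ncard = s.ncard := by
    have injective : Function.Injective (cubicPhase κ c v) := fun w w' h ↦ by
      simpa [cubicPhase, hc] using h
    exact Set.ncard_preimage_of_injective_subset_range injective
      fun y _ ↦ Finite.surjective_of_injective injective y
  rw [ncard_setOf_prod (fun v w ↦ cubicPhase κ c v w ∈ s)]
  simp only [slice, sum_const, card_univ, smul_eq_mul]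

variable {R : Type*} [CommRing R] [IsDomain R] {ψ : AddChar F R}

lemma ncard_cubicSum_zero_left_eq_zero [CharZero R] (hψ : ψ ≠ 1) (hfrob : ∀ x, ψ (x ^ 3) = ψ x)
    (κ : F) :
    {p : F × F | cubicSum ψ κ 0 p.1 p.2 = 0}.ncard + Fintype.card F = Fintype.card F ^ 2 := by
  classical
  have fiber : {p : F × F | cubicSum ψ κ 0 p.1 p.2 = 0} = ({-1}ᶜ : Set F) ×ˢ Set.univ := by
    ext p
    simp [cubicSum_zero_left hψ hfrob]
  have compl := Set.ncard_add_ncard_compl ({-1} : Set F)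
  rw [Set.ncard_singleton, Nat.card_eq_fintype_card] at compl
  rw [fiber, Set.ncard_prod, Set.ncard_univ, Nat.card_eq_fintype_card, ← compl]
  ring

lemma ncard_cubicSum_zero_left_eq_card_sq [CharZero R] (hψ : ψ ≠ 1)
    (hfrob : ∀ x, ψ (x ^ 3) = ψ x) (κ : F) :
    {p : F × F | cubicSum ψ κ 0 p.1 p.2 = (Fintype.card F : R) ^ 2}.ncard = Fintype.card F := by
  classical
  have fiber : {p : F × F | cubicSum ψ κ 0 p.1 p.2 = (Fintype.card F : R) ^ 2}
      = ({-1} : Set F) ×ˢ Set.univ := by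
    ext p
    simp [cubicSum_zero_left hψ hfrob, eq_comm (a := (0 : R))]
  rw [fiber, Set.ncard_prod, Set.ncard_univ, Set.ncard_singleton, Nat.card_eq_fintype_card,
    one_mul]

lemma ne_zero_of_sq_eq_mul_card_pow_three [CharZero R] {m : ℤ} (hm : m ≠ 0) {val : R}
    (hval : val ^ 2 = m ^ 2 * Fintype.card F ^ 3) : val ≠ 0 := by
  rintro rfl
  simp [hm, eq_comm (a := (0 : R))] at hval

lemma ne_card_sq_of_sq_eq_mul_card_pow_three [CharZero R] (h4 : Fintype.card F % 4 = 1) {m : ℤ}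
    (hm : m = 2 ∨ m = -1) {val : R} (hval : val ^ 2 = m ^ 2 * Fintype.card F ^ 3) :
    val ≠ Fintype.card F ^ 2 := by
  rintro rfl
  have card_ne : (Fintype.card F : R) ≠ 0 := Nat.cast_ne_zero.mpr Fintype.card_ne_zero
  have card_eq : (Fintype.card F : R) = m ^ 2 :=
    mul_right_cancel₀ (pow_ne_zero 3 card_ne) (by linear_combination hval)
  have one_lt : 1 < Fintype.card F := Fintype.one_lt_card
  have card_eq_int : (Fintype.card F : ℤ) = m ^ 2 := by exact_mod_cast card_eq
  rcases hm with rfl | rfl <;> omega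

variable [CharP F 3]

lemma exists_cubicSum_sq_sq_eq [CharZero R] (h4 : Fintype.card F % 4 = 1) (hψ : ψ ≠ 1)
    (hfrob : ∀ x, ψ (x ^ 3) = ψ x) {c : F} (hc : c ≠ 0) (κ v w : F) :
    ∃ m : ℤ, (m = 2 ∨ m = -1) ∧ cubicSum ψ κ (c ^ 2) v w ^ 2 = m ^ 2 * Fintype.card F ^ 3 := by
  classical
  obtain ⟨m, hm, phase⟩ : ∃ m : ℤ, (m = 2 ∨ m = -1) ∧
      ψ (cubicPhase κ c v w) + ψ (-cubicPhase κ c v w) = m := by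
    rcases addChar_add_neg_of_charP_three ψ (cubicPhase κ c v w) with h | h
    · exact ⟨2, Or.inl rfl, by rw [h, Int.cast_ofNat]⟩
    · exact ⟨-1, Or.inr rfl, by rw [h, Int.cast_neg, Int.cast_one]⟩
  have chi_sq : (quadraticChar F c : R) ^ 2 = 1 := by
    rw [← Int.cast_pow, quadraticChar_sq_one hc, Int.cast_one]
  refine ⟨m, hm, ?_⟩
  rw [cubicSum_sq h4 hψ hfrob hc, phase, mul_pow, mul_pow, mul_pow, chi_sq,
    quadraticGaussSum_sq (ringChar_ne_two_of_charP_three F) h4 hψ]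
  ring

lemma two_mul_ncard_cubicSum_eq_zero [CharZero R] (h4 : Fintype.card F % 4 = 1) (hψ : ψ ≠ 1)
    (hfrob : ∀ x, ψ (x ^ 3) = ψ x) (κ : F) :
    2 * {p : F × F × F | cubicSum ψ κ p.1 p.2.1 p.2.2 = 0}.ncard + 2 * Fintype.card F
      = Fintype.card F ^ 3 + Fintype.card F ^ 2 := by
  classical
  have hF := ringChar_ne_two_of_charP_three F
  have fiber (u : F) : (2 * {p : F × F | cubicSum ψ κ u p.1 p.2 = 0}.ncard : ℤ)
      = (Fintype.card F : ℤ) ^ 2 * (1 - quadraticChar F u)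
        + if u = 0 then (Fintype.card F : ℤ) ^ 2 - 2 * Fintype.card F else 0 := by
    rcases eq_or_ne u 0 with rfl | hu
    · rw [if_pos rfl, MulChar.map_zero]
      have count := ncard_cubicSum_zero_left_eq_zero hψ hfrob κ
      zify at count
      linear_combination 2 * count
    by_cases square : IsSquare u
    · obtain ⟨c, rfl⟩ := square.exists_sq
      have nonvanishing (p : F × F) : cubicSum ψ κ (c ^ 2) p.1 p.2 ≠ 0 := by
        obtain ⟨m, hm, h⟩ :=
          exists_cubicSum_sq_sq_eq h4 hψ hfrob (ne_zero_pow two_ne_zero hu) κ p.1 p.2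
        exact ne_zero_of_sq_eq_mul_card_pow_three (by omega) h
      simp [nonvanishing, (quadraticChar_one_iff_isSquare hu).mpr square, hu]
    · simp [cubicSum_of_not_isSquare hψ hfrob square, hu,
        quadraticChar_neg_one_iff_not_isSquare.mpr square, Set.ncard_univ]
      ring
  have total := sum_congr rfl fun u (_ : u ∈ univ) ↦ fiber u
  rw [← mul_sum, ← Nat.cast_sum,
    ← ncard_setOf_prod (fun u (p : F × F) ↦ cubicSum ψ κ u p.1 p.2 = 0), sum_add_distrib,
    ← mul_sum, sum_sub_distrib, quadraticChar_sum_zero hF, Fintype.sum_ite_eq', sum_const,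
    card_univ, nsmul_one] at total
  zify
  linear_combination total

lemma ncard_cubicSum_eq_card_sq [CharZero R] (h4 : Fintype.card F % 4 = 1) (hψ : ψ ≠ 1)
    (hfrob : ∀ x, ψ (x ^ 3) = ψ x) (κ : F) :
    {p : F × F × F | cubicSum ψ κ p.1 p.2.1 p.2.2 = (Fintype.card F : R) ^ 2}.ncard
      = Fintype.card F := by
  have fiber {u : F} (hu : u ≠ 0) (v w : F) : cubicSum ψ κ u v w ≠ (Fintype.card F : R) ^ 2 := by
    by_cases square : IsSquare u
    · obtain ⟨c, rfl⟩ := square.exists_sq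
      obtain ⟨m, hm, h⟩ :=
        exists_cubicSum_sq_sq_eq h4 hψ hfrob (ne_zero_pow two_ne_zero hu) κ v w
      exact ne_card_sq_of_sq_eq_mul_card_pow_three h4 hm h
    · simp [cubicSum_of_not_isSquare hψ hfrob square, eq_comm (a := (0 : R))]
  rw [ncard_setOf_prod (fun u (p : F × F) ↦ cubicSum ψ κ u p.1 p.2 = (Fintype.card F : R) ^ 2),
    Fintype.sum_eq_single 0 fun u hu ↦ by simp [fiber hu],
    ncard_cubicSum_zero_left_eq_card_sq hψ hfrob]

lemma four_mul_ncard_cubicSum_eq [DecidableEq F] (h4 : Fintype.card F % 4 = 1) (hψ : ψ ≠ 1)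
    (hfrob : ∀ x, ψ (x ^ 3) = ψ x) (κ : F) {val : R} (val_ne_zero : val ≠ 0)
    (val_ne_sq : val ≠ (Fintype.card F : R) ^ 2) {e m : ℤ} (he : e = 1 ∨ e = -1)
    (criterion : ∀ c ≠ 0, ∀ y, Fintype.card F * quadraticGaussSum ψ * quadraticChar F c *
      (ψ y + ψ (-y)) = val ↔ quadraticChar F c = e ∧ ψ y + ψ (-y) = m) :
    4 * {p : F × F × F | cubicSum ψ κ p.1 p.2.1 p.2.2 = val}.ncard +
        Fintype.card F * {y : F | ψ y + ψ (-y) = m}.ncard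
      = Fintype.card F ^ 2 * {y : F | ψ y + ψ (-y) = m}.ncard := by
  have fiber_zero : {p : F × F | cubicSum ψ κ 0 p.1 p.2 = val}.ncard = 0 := by
    have no_solution (p : F × F) : cubicSum ψ κ 0 p.1 p.2 ≠ val := by
      rw [cubicSum_zero_left hψ hfrob]
      split_ifs
      exacts [val_ne_sq.symm, val_ne_zero.symm]
    simp [no_solution]
  have fiber_not_square (u : F) (hu : ¬ IsSquare u) :
      {p : F × F | cubicSum ψ κ u p.1 p.2 = val}.ncard = 0 := by
    simp [cubicSum_of_not_isSquare hψ hfrob hu, val_ne_zero.symm]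
  have fiber_sq (c : F) : {p : F × F | cubicSum ψ κ (c ^ 2) p.1 p.2 = val}.ncard
      = if quadraticChar F c = e then Fintype.card F * {y : F | ψ y + ψ (-y) = m}.ncard else 0 := by
    rcases eq_or_ne c 0 with rfl | hc
    · rw [zero_pow two_ne_zero, fiber_zero, MulChar.map_zero, if_neg (by omega)]
    simp only [cubicSum_sq h4 hψ hfrob hc, criterion c hc]
    split_ifs with h
    · simpa only [h, true_and] using! ncard_setOf_cubicPhase_mem κ hc {y | ψ y + ψ (-y) = m}
    · simp only [h, false_and, Set.ofPred_false, Set.ncard_empty]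
  have hF := ringChar_ne_two_of_charP_three F
  have double := two_mul_sum_eq_sum_comp_sq hF fiber_zero fiber_not_square
  have roots := two_mul_ncard_quadraticChar_eq_add_one hF he
  rw [← ncard_setOf_prod (fun u (p : F × F) ↦ cubicSum ψ κ u p.1 p.2 = val)] at double
  simp only [fiber_sq, ← sum_filter, sum_const, smul_eq_mul] at double
  rw [Set.ncard_eq_toFinset_card', Set.toFinset_ofPred] at roots
  zify at double roots ⊢
  linear_combination 2 * double +
    (Fintype.card F * {y : F | ψ y + ψ (-y) = m}.ncard : ℤ) * roots

/-- Parametrising `val` by its square makes the sign of the quadratic Gauss sum irrelevant. -/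
lemma six_mul_natAbs_mul_ncard_cubicSum_eq [CharZero R] (h4 : Fintype.card F % 4 = 1)
    (hψ : ψ ≠ 1) (hfrob : ∀ x, ψ (x ^ 3) = ψ x) (κ : F) {m : ℤ} (hm : m = 2 ∨ m = -1) {val : R}
    (hval : val ^ 2 = m ^ 2 * Fintype.card F ^ 3) :
    6 * m.natAbs * {p : F × F × F | cubicSum ψ κ p.1 p.2.1 p.2.2 = val}.ncard + Fintype.card F ^ 2
      = Fintype.card F ^ 3 := by
  classical
  set G := quadraticGaussSum ψ
  have gauss_sq : G ^ 2 = Fintype.card F :=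
    quadraticGaussSum_sq (ringChar_ne_two_of_charP_three F) h4 hψ
  have card_ne : (Fintype.card F : R) ≠ 0 := Nat.cast_ne_zero.mpr Fintype.card_ne_zero
  have amplitude_ne : Fintype.card F * G ≠ 0 :=
    mul_ne_zero card_ne fun h ↦ card_ne (by rw [← gauss_sq, h, zero_pow two_ne_zero])
  obtain ⟨e, he, rfl⟩ : ∃ e : ℤ, (e = 1 ∨ e = -1) ∧ val = Fintype.card F * G * (e * m) := by
    have squares : val ^ 2 = (Fintype.card F * G * m) ^ 2 := by
      rw [hval, mul_pow, mul_pow, gauss_sq]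
      ring
    rcases sq_eq_sq_iff_eq_or_eq_neg.mp squares with h | h
    · exact ⟨1, Or.inl rfl, by rw [h]; push_cast; ring⟩
    · exact ⟨-1, Or.inr rfl, by rw [h]; push_cast; ring⟩
  have criterion (c : F) (hc : c ≠ 0) (y : F) :
      Fintype.card F * G * quadraticChar F c * (ψ y + ψ (-y)) = Fintype.card F * G * (e * m)
        ↔ quadraticChar F c = e ∧ ψ y + ψ (-y) = m := by
    rw [mul_assoc, mul_right_inj' amplitude_ne]
    rcases quadraticChar_dichotomy hc with h | h <;> rw [h] <;>
      rcases addChar_add_neg_of_charP_three ψ y with h | h <;> rw [h] <;>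
      rcases he with rfl | rfl <;> rcases hm with rfl | rfl <;> norm_num
  have count := four_mul_ncard_cubicSum_eq h4 hψ hfrob κ
    (ne_zero_of_sq_eq_mul_card_pow_three (by omega) hval)
    (ne_card_sq_of_sq_eq_mul_card_pow_three h4 hm hval) he criterion
  have phases := three_mul_ncard_addChar_add_neg_eq hψ hm
  refine Nat.eq_of_mul_eq_mul_left two_pos ?_
  zify at count phases ⊢
  linear_combination 3 * |m| * count + ((Fintype.card F : ℤ) ^ 2 - Fintype.card F) * phases

end ValueCounts

section CyclicCubic

variable {L K : Type*} [Field L] [Field K] [Algebra L K]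

section Trace

variable [IsGalois L K] (hdeg : Module.finrank L K = 3) {σ : Gal(K/L)} (hσ : σ ≠ 1)

include hdeg hσ

lemma orderOf_eq_three_of_finrank_eq_three : orderOf σ = 3 := by
  have : FiniteDimensional L K := Module.finite_of_finrank_eq_succ hdeg
  have : Fact (Nat.Prime 3) := ⟨Nat.prime_three⟩
  refine orderOf_eq_prime ?_ hσ
  rw [← hdeg, ← IsGalois.card_aut_eq_finrank, pow_card_eq_one']

lemma algebraMap_trace_eq_of_finrank_eq_three (x : K) :
    algebraMap L K (Algebra.trace L K x) = x + σ x + σ (σ x) := by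
  classical
  have : FiniteDimensional L K := Module.finite_of_finrank_eq_succ hdeg
  have order := orderOf_eq_three_of_finrank_eq_three hdeg hσ
  have injective : Set.InjOn (σ ^ ·) (range 3 : Finset ℕ) := fun i hi j hj ↦
    pow_injOn_Iio_orderOf (by simpa [order] using hi) (by simpa [order] using hj)
  have powers : image (σ ^ ·) (range 3) = univ := by
    refine eq_univ_of_card _ ?_
    rw [card_image_of_injOn injective, card_range, ← Nat.card_eq_fintype_card,
      IsGalois.card_aut_eq_finrank, hdeg]
  rw [trace_eq_sum_automorphisms, ← powers, sum_image injective]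
  simp [sum_range_succ]

/-- Additive Hilbert 90 for the constant `1`, whose trace vanishes in characteristic three. -/
lemma exists_apply_eq_add_one [CharP K 3] : ∃ θ : K, σ θ = θ + 1 := by
  have : FiniteDimensional L K := Module.finite_of_finrank_eq_succ hdeg
  obtain ⟨y, hy⟩ := Algebra.trace_surjective L K (-1)
  have orbit_sum := algebraMap_trace_eq_of_finrank_eq_three hdeg hσ y
  have orbit_closed : σ (σ (σ y)) = y := by
    have pow_three : σ ^ 3 = 1 := by
      rw [← orderOf_eq_three_of_finrank_eq_three hdeg hσ, pow_orderOf_eq_one]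
    simpa [pow_succ] using congrArg (· y) pow_three
  rw [hy, map_neg, map_one] at orbit_sum
  refine ⟨σ y - σ (σ y), ?_⟩
  rw [map_sub, orbit_closed]
  grind

end Trace

/-- The element of `K` with coordinates `(a, b, c)` in the `L`-basis `1, θ, -θ ^ 2`. -/
def cubicElement (θ : K) (p : L × L × L) : K :=
  algebraMap L K p.1 + algebraMap L K p.2.1 * θ - algebraMap L K p.2.2 * θ ^ 2

variable (L) in
/-- The coordinates of `z` dual to the basis `1, θ, θ ^ 2` under the trace form of `K / L`. -/
noncomputable def cubicFrequency (θ z : K) : L × L × L :=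
  (Algebra.trace L K z, Algebra.trace L K (z * θ), Algebra.trace L K (z * θ ^ 2))

variable [IsGalois L K] (hdeg : Module.finrank L K = 3) {σ : Gal(K/L)} {θ : K}
  [CharP K 3] (hσ : σ θ = θ + 1)

include hσ in
omit [IsGalois L K] [CharP K 3] in
lemma ne_one_of_apply_eq_add_one : σ ≠ 1 := by
  rintro rfl
  simp at hσ

include hσ hdeg

lemma trace_mul_sub_sq_mul_apply_cubicElement (z : K) (a b c : L) :
    Algebra.trace L K (z * cubicElement θ (a, b, c)
        - cubicElement θ (a, b, c) ^ 2 * σ (cubicElement θ (a, b, c)))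
      = a * (Algebra.trace L K z - c ^ 2) + (Algebra.trace L K (z * θ) * b
        - Algebra.trace L K (z * θ ^ 2) * c + (b ^ 3 - b ^ 2 * c - b * c ^ 2
          + Algebra.trace L K (θ ^ 4 * (θ + 1) ^ 2) * c ^ 3)) := by
  have trace_eq := algebraMap_trace_eq_of_finrank_eq_three hdeg (ne_one_of_apply_eq_add_one hσ)
  refine FaithfulSMul.algebraMap_injective L K ?_
  simp only [map_add, map_sub, map_mul, map_pow, trace_eq, cubicElement, AlgEquiv.commutes, hσ,
    map_one]
  grind

lemma cubicFrequency_cubicElement (a b c : L) :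
    cubicFrequency L θ (cubicElement θ (a, b, c)) = (c, -b, c - a) := by
  have trace_eq := algebraMap_trace_eq_of_finrank_eq_three hdeg (ne_one_of_apply_eq_add_one hσ)
  refine Prod.ext ?_ (Prod.ext ?_ ?_) <;> refine FaithfulSMul.algebraMap_injective L K ?_ <;>
    simp only [cubicFrequency, cubicElement, trace_eq, map_add, map_sub, map_mul, map_pow, map_neg,
      map_one, AlgEquiv.commutes, hσ] <;> grind

lemma bijective_cubicElement [Finite L] : Function.Bijective (cubicElement (L := L) θ) := by
  have injective : Function.Injective (cubicElement (L := L) θ) := fun ⟨a, b, c⟩ ⟨_, _, _⟩ h ↦ by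
    have frequency := congrArg (cubicFrequency L θ) h
    simp only [cubicFrequency_cubicElement hdeg hσ, Prod.mk.injEq, neg_inj] at frequency
    obtain ⟨rfl, rfl, difference⟩ := frequency
    exact congrArg (·, b, c) (sub_right_inj.mp difference)
  have : Module.Finite L K := Module.finite_of_finrank_eq_succ hdeg
  have : Finite K := Module.finite_of_finite L
  refine injective.bijective_of_nat_card_le (le_of_eq ?_)
  rw [Module.natCard_eq_pow_finrank (K := L), hdeg, Nat.card_prod, Nat.card_prod]
  ring

lemma bijective_cubicFrequency [Finite L] : Function.Bijective (cubicFrequency L θ) := by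
  refine (Function.Bijective.of_comp_iff _ (bijective_cubicElement hdeg hσ)).mp
    (Function.bijective_iff_has_inverse.mpr ⟨fun p ↦ (p.1 - p.2.2, -p.2.1, p.1), ?_, ?_⟩) <;>
    rintro ⟨a, b, c⟩ <;> simp [cubicFrequency_cubicElement hdeg hσ]

variable [Fintype L] [Fintype K] {R : Type*} [CommRing R]

lemma sum_addChar_trace_eq_cubicSum (ψ : AddChar L R) (z : K) :
    ∑ x, ψ (Algebra.trace L K (z * x - x ^ 2 * σ x))
      = cubicSum ψ (Algebra.trace L K (θ ^ 4 * (θ + 1) ^ 2)) (cubicFrequency L θ z).1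
          (cubicFrequency L θ z).2.1 (cubicFrequency L θ z).2.2 := by
  rw [← Function.Bijective.sum_comp (bijective_cubicElement (L := L) hdeg hσ)]
  simp only [Fintype.sum_prod_type_right, trace_mul_sub_sq_mul_apply_cubicElement hdeg hσ]
  rfl

lemma ncard_sum_addChar_trace_eq (ψ : AddChar L R) (val : R) :
    {z : K | ∑ x, ψ (Algebra.trace L K (z * x - x ^ 2 * σ x)) = val}.ncard
      = {p : L × L × L | cubicSum ψ (Algebra.trace L K (θ ^ 4 * (θ + 1) ^ 2)) p.1 p.2.1 p.2.2
          = val}.ncard := by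
  simp only [sum_addChar_trace_eq_cubicSum hdeg hσ]
  exact Set.ncard_congr' ((Equiv.ofBijective _ (bijective_cubicFrequency hdeg hσ)).subtypeEquiv
    fun _ ↦ Iff.rfl)

end CyclicCubic

section Ternary

/-- The canonical additive character `x ↦ ω ^ Tr x` of a field of characteristic three, where
`ω = exp (2πi / 3)` and `Tr` is the absolute trace. -/
noncomputable def ternaryTraceChar (F : Type*) [Field F] [Algebra (ZMod 3) F] : AddChar F ℂ :=
  (AddChar.zmodChar 3 (Complex.isPrimitiveRoot_exp 3 (by norm_num)).pow_eq_one).compAddMonoidHom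
    (Algebra.trace (ZMod 3) F).toAddMonoidHom

variable {F : Type*} [Field F] [Algebra (ZMod 3) F]

lemma ternaryTraceChar_apply (x : F) : ternaryTraceChar F x
    = Complex.exp (2 * Real.pi * Complex.I / 3) ^ (Algebra.trace (ZMod 3) F x).val :=
  rfl

lemma ternaryTraceChar_trace {K : Type*} [Field K] [Algebra (ZMod 3) K] [Algebra F K]
    [IsScalarTower (ZMod 3) F K] [Finite K] (x : K) :
    ternaryTraceChar F (Algebra.trace F K x) = ternaryTraceChar K x := by
  have : Finite F := Finite.of_injective _ (algebraMap F K).injective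
  rw [ternaryTraceChar_apply, Algebra.trace_trace, ternaryTraceChar_apply]

lemma ternaryTraceChar_ne_one [Finite F] : ternaryTraceChar F ≠ 1 := by
  obtain ⟨x, hx⟩ := Algebra.trace_surjective (ZMod 3) F 1
  refine fun h ↦ (Complex.isPrimitiveRoot_exp 3 (by norm_num)).ne_one (by norm_num) ?_
  simpa [ternaryTraceChar_apply, hx, ZMod.val_one] using DFunLike.congr_fun h x

lemma ternaryTraceChar_pow_three [Finite F] (x : F) :
    ternaryTraceChar F (x ^ 3) = ternaryTraceChar F x := by
  rw [ternaryTraceChar_apply, ternaryTraceChar_apply,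
    ← Algebra.trace_eq_of_algEquiv (FiniteField.frobeniusAlgEquivOfAlgebraic (ZMod 3) F) x,
    FiniteField.coe_frobeniusAlgEquivOfAlgebraic, ZMod.card]

lemma card_galoisField_three {r : ℕ} (hr : r ≠ 0) : Fintype.card (GaloisField 3 r) = 3 ^ r := by
  rw [← Nat.card_eq_fintype_card, GaloisField.card 3 r hr]

lemma finrank_galoisField_three_mul {r : ℕ} (hr : r ≠ 0)
    [Algebra (GaloisField 3 r) (GaloisField 3 (3 * r))]
    [IsScalarTower (ZMod 3) (GaloisField 3 r) (GaloisField 3 (3 * r))] :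
    Module.finrank (GaloisField 3 r) (GaloisField 3 (3 * r)) = 3 := by
  have tower := Module.finrank_mul_finrank (ZMod 3) (GaloisField 3 r) (GaloisField 3 (3 * r))
  rw [GaloisField.finrank 3 hr, GaloisField.finrank 3 (by omega), mul_comm] at tower
  exact Nat.eq_of_mul_eq_mul_right (by omega) tower

lemma exists_ncard_ternaryWeilSum_eq {r i : ℕ} (hr : r ≠ 0) (hi : ¬ 3 ∣ i) :
    ∃ κ : GaloisField 3 r, ∀ val,
      {z | ternaryWeilSum (3 * r) (3 ^ (i * r) + 2) z = val}.ncard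
        = {p : GaloisField 3 r × GaloisField 3 r × GaloisField 3 r |
          cubicSum (ternaryTraceChar _) κ p.1 p.2.1 p.2.2 = val}.ncard := by
  obtain ⟨φ⟩ : Nonempty (GaloisField 3 r →ₐ[ZMod 3] GaloisField 3 (3 * r)) := by
    refine FiniteField.nonempty_algHom_of_finrank_dvd ?_
    rw [GaloisField.finrank 3 hr, GaloisField.finrank 3 (by omega)]
    exact dvd_mul_left r 3
  let _ : Algebra (GaloisField 3 r) (GaloisField 3 (3 * r)) := φ.toRingHom.toAlgebra
  have : IsScalarTower (ZMod 3) (GaloisField 3 r) (GaloisField 3 (3 * r)) :=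
    IsScalarTower.of_algHom φ
  have hdeg := finrank_galoisField_three_mul hr
  let frob := FiniteField.frobeniusAlgEquivOfAlgebraic (GaloisField 3 r) (GaloisField 3 (3 * r))
  have frob_pow_ne_one : frob ^ i ≠ 1 := by
    rwa [Ne, ← orderOf_dvd_iff_pow_eq_one, FiniteField.orderOf_frobeniusAlgEquivOfAlgebraic, hdeg]
  have frob_pow_apply (x : GaloisField 3 (3 * r)) : (frob ^ i) x = x ^ 3 ^ (i * r) := by
    rw [AlgEquiv.coe_pow, FiniteField.coe_frobeniusAlgEquivOfAlgebraic_iterate,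
      card_galoisField_three hr, mul_comm i, pow_mul]
  obtain ⟨θ, hθ⟩ := exists_apply_eq_add_one hdeg frob_pow_ne_one
  refine ⟨Algebra.trace _ _ (θ ^ 4 * (θ + 1) ^ 2), fun val ↦ ?_⟩
  rw [← ncard_sum_addChar_trace_eq hdeg hθ]
  simp only [ternaryTraceChar_trace]
  simp only [ternaryTraceChar_apply, frob_pow_apply, ternaryWeilSum, pow_add, mul_comm]

variable {r i : ℕ} (hr : r ≠ 0) (hre : Even r) (hi : ¬ 3 ∣ i)

include hr hre

lemma card_galoisField_three_mod_four : Fintype.card (GaloisField 3 r) % 4 = 1 := by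
  obtain ⟨k, hk⟩ := hre
  rw [card_galoisField_three hr, hk, ← two_mul, pow_mul, Nat.pow_mod]
  simp

include hi

lemma ncard_ternaryWeilSum_eq_zero :
    {z | ternaryWeilSum (3 * r) (3 ^ (i * r) + 2) z = 0}.ncard
      = (3 ^ (3 * r) + 3 ^ (2 * r)) / 2 - 3 ^ r := by
  obtain ⟨κ, transfer⟩ := exists_ncard_ternaryWeilSum_eq hr hi
  have count := two_mul_ncard_cubicSum_eq_zero (card_galoisField_three_mod_four hr hre)
    ternaryTraceChar_ne_one ternaryTraceChar_pow_three κ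
  rw [← transfer, card_galoisField_three hr, ← pow_mul', ← pow_mul'] at count
  omega

lemma ncard_ternaryWeilSum_eq_card_sq :
    {z | ternaryWeilSum (3 * r) (3 ^ (i * r) + 2) z = 3 ^ (2 * r)}.ncard = 3 ^ r := by
  obtain ⟨κ, transfer⟩ := exists_ncard_ternaryWeilSum_eq hr hi
  have count := ncard_cubicSum_eq_card_sq (card_galoisField_three_mod_four hr hre)
    ternaryTraceChar_ne_one ternaryTraceChar_pow_three κ
  rwa [← transfer, card_galoisField_three hr, Nat.cast_pow, ← pow_mul'] at count

lemma ncard_ternaryWeilSum_eq_mul_three_pow {m : ℤ} (hm : m = 2 ∨ m = -1) (e : ℂ)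
    (he : e ^ 2 = m ^ 2) :
    {z | ternaryWeilSum (3 * r) (3 ^ (i * r) + 2) z = e * 3 ^ (3 * r / 2)}.ncard
      = (3 ^ (3 * r - 1) - 3 ^ (2 * r - 1)) / (2 * m.natAbs) := by
  obtain ⟨κ, transfer⟩ := exists_ncard_ternaryWeilSum_eq hr hi
  have hval : (e * 3 ^ (3 * r / 2)) ^ 2 = m ^ 2 * (Fintype.card (GaloisField 3 r) : ℂ) ^ 3 := by
    rw [mul_pow, he, card_galoisField_three hr, Nat.cast_pow, ← pow_mul, ← pow_mul',
      Nat.div_mul_cancel (hre.two_dvd.mul_left 3), Nat.cast_ofNat]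
  have count := six_mul_natAbs_mul_ncard_cubicSum_eq (card_galoisField_three_mod_four hr hre)
    ternaryTraceChar_ne_one ternaryTraceChar_pow_three κ hm hval
  rw [← transfer, card_galoisField_three hr, ← pow_mul', ← pow_mul',
    ← mul_pow_sub_one (by omega : 2 * r ≠ 0), ← mul_pow_sub_one (by omega : 3 * r ≠ 0)] at count
  refine (Nat.div_eq_of_eq_mul_right (by omega) ?_).symm
  rw [show 6 = 3 * 2 from rfl, mul_assoc 3, mul_assoc 3] at count
  omega

end Ternary

theorem ternary_cross_correlation_distribution_even_general {r i : ℕ} (hr : r ≠ 0) (hre : Even r)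
    (hi : ¬ 3 ∣ i) :
    {z | ternaryWeilSum (3 * r) (3 ^ (i * r) + 2) z = 0}.ncard
        = (3 ^ (3 * r) + 3 ^ (2 * r)) / 2 - 3 ^ r ∧
    {z | ternaryWeilSum (3 * r) (3 ^ (i * r) + 2) z = 3 ^ (2 * r)}.ncard = 3 ^ r ∧
    {z | ternaryWeilSum (3 * r) (3 ^ (i * r) + 2) z = 3 ^ (3 * r / 2)}.ncard
        = (3 ^ (3 * r - 1) - 3 ^ (2 * r - 1)) / 2 ∧
    {z | ternaryWeilSum (3 * r) (3 ^ (i * r) + 2) z = -3 ^ (3 * r / 2)}.ncard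
        = (3 ^ (3 * r - 1) - 3 ^ (2 * r - 1)) / 2 ∧
    {z | ternaryWeilSum (3 * r) (3 ^ (i * r) + 2) z = 2 * 3 ^ (3 * r / 2)}.ncard
        = (3 ^ (3 * r - 1) - 3 ^ (2 * r - 1)) / 4 ∧
    {z | ternaryWeilSum (3 * r) (3 ^ (i * r) + 2) z = -(2 * 3 ^ (3 * r / 2))}.ncard
        = (3 ^ (3 * r - 1) - 3 ^ (2 * r - 1)) / 4 := by
  have amplitude {m : ℤ} (hm : m = 2 ∨ m = -1) :=
    ncard_ternaryWeilSum_eq_mul_three_pow hr hre hi hm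
  exact ⟨ncard_ternaryWeilSum_eq_zero hr hre hi, ncard_ternaryWeilSum_eq_card_sq hr hre hi,
    by simpa using amplitude (Or.inr rfl) 1 (by norm_num),
    by simpa using amplitude (Or.inr rfl) (-1) (by norm_num),
    by simpa using amplitude (Or.inl rfl) 2 (by norm_num),
    by simpa using amplitude (Or.inl rfl) (-2) (by norm_num)⟩

/-- For even `r ≥ 2` with `gcd(r,3) = 1`, `n = 3r` and `d = 3^r + 2` or
`d = 3^(2r) + 2`, the value distribution of the Weil sum `S_d(z)`,
`z` ranging over `GF(3^n)`. -/
theorem ternary_cross_correlation_distribution_even (r : ℕ) (hr : 2 ≤ r) (hre : Even r)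
    (h3 : Nat.gcd r 3 = 1) (n d : ℕ) (hn : n = 3 * r)
    (hd : d = 3 ^ r + 2 ∨ d = 3 ^ (2 * r) + 2) :
    Set.ncard {z : GaloisField 3 n | ternaryWeilSum n d z = 0}
        = (3 ^ (3 * r) + 3 ^ (2 * r)) / 2 - 3 ^ r ∧
    Set.ncard {z : GaloisField 3 n | ternaryWeilSum n d z = 3 ^ (2 * r)} = 3 ^ r ∧
    Set.ncard {z : GaloisField 3 n | ternaryWeilSum n d z = 3 ^ (3 * r / 2)}
        = (3 ^ (3 * r - 1) - 3 ^ (2 * r - 1)) / 2 ∧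
    Set.ncard {z : GaloisField 3 n | ternaryWeilSum n d z = -3 ^ (3 * r / 2)}
        = (3 ^ (3 * r - 1) - 3 ^ (2 * r - 1)) / 2 ∧
    Set.ncard {z : GaloisField 3 n | ternaryWeilSum n d z = 2 * 3 ^ (3 * r / 2)}
        = (3 ^ (3 * r - 1) - 3 ^ (2 * r - 1)) / 4 ∧
    Set.ncard {z : GaloisField 3 n | ternaryWeilSum n d z = -(2 * 3 ^ (3 * r / 2))}
        = (3 ^ (3 * r - 1) - 3 ^ (2 * r - 1)) / 4 := by
  obtain ⟨i, hi, rfl⟩ : ∃ i, ¬ 3 ∣ i ∧ d = 3 ^ (i * r) + 2 :=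
    hd.elim (fun h ↦ ⟨1, by norm_num, by rwa [one_mul]⟩) (⟨2, by norm_num, ·⟩)
  subst hn
  exact ternary_cross_correlation_distribution_even_general (by omega) hre hi
end

section
/- Let m ≥ 1 and let l ≥ 2 be an even integer, and set q = 2^{2lm}. For a in GF(q), the character sum Σ_{x ∈ GF(q)} (-1)^{Tr(a·x^{2^m+1})} equals 2^{2lm} if a = 0; equals -2^{(l+1)m} if a is a nonzero (2^m+1)-th power in GF(q) (i.e., a = y^{2^m+1} for some nonzero y in GF(q)); and equals 2^{lm} if a is not a (2^m+1)-th power in GF(q). -/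
/-!
Let `Q = 2 ^ m`, `|F| = Q ^ (2l)` and `S a = ∑ x, χ (a x ^ (Q + 1))`, where `χ x = (-1) ^ Tr x`.
Since `χ` is Frobenius invariant, `χ` of the polar form of `a x ^ (Q + 1)` is an additive character
in `x ^ Q`, and orthogonality gives `S a ^ 2 = |F| ∑ χ (a y ^ (Q + 1))` over those `y` for which
`a y ^ (Q + 1)` lies in the subfield `GF(Q)`. As `F` has even degree over `GF(Q)`, the trace to
`GF(2)` vanishes there, so `S a ^ 2` is `|F|` times the number of such `y`: one if `a` is not a
`(Q + 1)`-th power, because every element of `GF(Q)` is one, and `Q ^ 2` if `a = 1`.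

The sign comes from counting: `x ↦ x ^ (Q + 1)` is `(Q + 1)`-to-one on units, hence
`S a ≡ 1 ≡ -Q` modulo `Q + 1`, and of the two square roots of `S a ^ 2` only the power of `-Q` is
`1` modulo `Q + 1`.
-/

open Finset

section FiniteGroups

theorem natCard_ker_dvd_sum_comp {G H R : Type*} [Group G] [Fintype G] [Monoid H] [Semiring R]
    (φ : G →* H) (f : H → R) : (Nat.card φ.ker : R) ∣ ∑ x, f (φ x) := by
  classical
  have card_fiber : ∀ b ∈ univ.image φ, #{x | φ x = b} = Nat.card φ.ker := by
    intro b hb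
    have hb_range : b ∈ Set.range φ := by simpa using hb
    rw [MonoidHom.card_fiber_eq_of_mem_range φ hb_range ⟨1, map_one φ⟩, ← Fintype.card_subtype,
      Nat.card_eq_fintype_card]
    exact Fintype.card_congr (Equiv.refl _)
  rw [sum_comp f φ]
  refine dvd_sum fun b hb => ?_
  rw [card_fiber b hb, nsmul_eq_mul]
  exact dvd_mul_right _ _

theorem natCard_ker_powMonoidHom {G : Type*} [CommGroup G] [IsCyclic G] [Finite G] {d : ℕ}
    (hd : d ∣ Nat.card G) : Nat.card (powMonoidHom d : G →* G).ker = d := by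
  rw [IsCyclic.card_powMonoidHom_ker, Nat.gcd_eq_right hd]

theorem exists_pow_eq_of_pow_eq_one {G : Type*} [Group G] [IsCyclic G] [Finite G] {d e : ℕ}
    (hde : d * e ∣ Nat.card G) {u : G} (hu : u ^ d = 1) : ∃ v : G, v ^ e = u := by
  obtain ⟨g, hg⟩ := IsCyclic.exists_generator (α := G)
  obtain ⟨k, rfl⟩ := mem_powers_iff_mem_zpowers.2 (hg u)
  have hd : 0 < d := Nat.pos_of_ne_zero fun h => Nat.card_pos.ne' (by simpa [h] using hde)
  have hcard : Nat.card G ∣ d * k := by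
    rw [← orderOf_eq_card_of_forall_mem_zpowers hg, mul_comm]
    exact orderOf_dvd_of_pow_eq_one (by simpa only [pow_mul] using hu)
  obtain ⟨j, rfl⟩ := Nat.dvd_of_mul_dvd_mul_left hd (hde.trans hcard)
  exact ⟨g ^ j, by simp only [← pow_mul, mul_comm]⟩

end FiniteGroups

section FiniteFields

theorem sum_eq_add_sum_units {G₀ M : Type*} [GroupWithZero G₀] [Fintype G₀] [DecidableEq G₀]
    [AddCommMonoid M] (f : G₀ → M) : ∑ x, f x = f 0 + ∑ u : G₀ˣ, f u := by
  rw [Fintype.sum_eq_add_sum_subtype_ne f 0, ← unitsEquivNeZero.sum_comp]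
  simp only [unitsEquivNeZero_apply_coe]

variable {F : Type*} [Field F]

theorem exists_pow_eq_of_pow_succ_eq_self [Finite F] {d e : ℕ} (hde : d * e ∣ Nat.card Fˣ) {z : F}
    (hz : z ^ (d + 1) = z) : ∃ y : F, y ^ e = z := by
  rcases eq_or_ne z 0 with rfl | hz_ne
  · have he : e ≠ 0 := right_ne_zero_of_mul (ne_zero_of_dvd_ne_zero Nat.card_pos.ne' hde)
    exact ⟨0, zero_pow he⟩
  have unit_pow : Units.mk0 z hz_ne ^ d = 1 := by
    rw [← mul_eq_right (b := Units.mk0 z hz_ne), ← pow_succ]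
    exact Units.ext hz
  obtain ⟨v, hv⟩ := exists_pow_eq_of_pow_eq_one hde unit_pow
  exact ⟨v, congrArg Units.val hv⟩

variable [Fintype F]

theorem dvd_sum_comp_pow_sub {R : Type*} [Ring R] {d : ℕ} (hd : d ∣ Nat.card Fˣ)
    (f : F → R) : (d : R) ∣ ∑ x, f (x ^ d) - f 0 := by
  classical
  have hd_ne : d ≠ 0 := ne_zero_of_dvd_ne_zero Nat.card_pos.ne' hd
  have hdvd := natCard_ker_dvd_sum_comp (powMonoidHom d : Fˣ →* Fˣ) fun u => f u
  rw [natCard_ker_powMonoidHom hd] at hdvd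
  simpa [sum_eq_add_sum_units, hd_ne] using hdvd

theorem card_filter_pow_succ_eq_self [DecidableEq F] {d : ℕ} (hd : d ∣ Nat.card Fˣ) :
    #{y : F | y ^ (d + 1) = y} = d + 1 := by
  have unit_iff (u : Fˣ) : (u : F) ^ (d + 1) = u ↔ u ∈ (powMonoidHom d : Fˣ →* Fˣ).ker := by
    rw [← Units.val_pow_eq_pow_val, Units.val_inj, pow_succ, mul_eq_right, MonoidHom.mem_ker,
      powMonoidHom_apply]
  rw [card_filter, sum_eq_add_sum_units, if_pos (zero_pow d.succ_ne_zero), add_comm]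
  simp only [unit_iff, sum_boole, Nat.cast_id]
  rw [← Fintype.card_subtype, ← Nat.card_eq_fintype_card]
  exact congrArg (· + 1) (natCard_ker_powMonoidHom hd)

theorem two_pow_sub_one_mul_two_pow_add_one_dvd_card_units {m l : ℕ}
    (hF : Fintype.card F = 2 ^ (2 * l * m)) : (2 ^ m - 1) * (2 ^ m + 1) ∣ Nat.card Fˣ := by
  rw [Nat.card_units, Nat.card_eq_fintype_card, hF, mul_comm (2 ^ m - 1), ← Nat.sq_sub_sq,
    one_pow, show 2 * l * m = m * 2 * l by ring, pow_mul, pow_mul]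
  exact Nat.sub_one_dvd_pow_sub_one _ _

end FiniteFields

section Trace

variable (K : Type*) {L : Type*} [Field K] [Fintype K] [Field L] [Finite L] [Algebra K L]

theorem trace_pow_card_pow (x : L) (k : ℕ) :
    Algebra.trace K L (x ^ Fintype.card K ^ k) = Algebra.trace K L x := by
  induction k with
  | zero => simp
  | succ k ih =>
    rw [pow_succ, pow_mul, ← ih]
    exact Algebra.trace_eq_of_algEquiv (FiniteField.frobeniusAlgEquivOfAlgebraic K L) _

theorem trace_eq_zero_of_pow_card_pow_eq_self [CharP K 2] {n : ℕ}
    (hn : Module.finrank K L = n + n) {z : L} (hz : z ^ Fintype.card K ^ n = z) :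
    Algebra.trace K L z = 0 := by
  have : CharP L 2 := charP_of_injective_algebraMap' K 2
  rw [← map_eq_zero (algebraMap K L), FiniteField.algebraMap_trace_eq_sum_pow, hn,
    sum_range_add, Nat.card_eq_fintype_card]
  simp only [pow_add, pow_mul, hz, CharTwo.add_self_eq_zero]

end Trace

theorem int_eq_of_sq_eq_sq_of_modEq_one {d s t : ℤ} (hd : ¬ d ∣ 2) (hs : s ≡ 1 [ZMOD d])
    (ht : t ≡ 1 [ZMOD d]) (hst : s ^ 2 = t ^ 2) : s = t := by
  refine (sq_eq_sq_iff_eq_or_eq_neg.1 hst).resolve_right fun hneg => hd ?_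
  have hsum : s + t ≡ 2 [ZMOD d] := hs.add ht
  rw [hneg, neg_add_cancel] at hsum
  simpa using hsum.dvd

section WeilSum

variable {F : Type*} [Field F] [Algebra (ZMod 2) F]

variable (F) in
/-- The canonical additive character `x ↦ (-1) ^ Tr x` of a finite field of characteristic two,
with values in `ℤ`. -/
noncomputable def traceSignChar : AddChar F ℤ :=
  (AddChar.zmodChar 2 (neg_one_sq : (-1 : ℤ) ^ 2 = 1)).compAddMonoidHom
    (Algebra.trace (ZMod 2) F).toAddMonoidHom

theorem traceSignChar_apply (x : F) :
    traceSignChar F x = (-1) ^ (Algebra.trace (ZMod 2) F x).val :=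
  rfl

theorem traceSignChar_isPrimitive [Finite F] : (traceSignChar F).IsPrimitive := by
  obtain ⟨x, hx⟩ := Algebra.trace_surjective (ZMod 2) F 1
  refine AddChar.IsPrimitive.of_ne_one (AddChar.ne_one_iff.2 ⟨x, ?_⟩)
  rw [traceSignChar_apply, hx]
  decide

theorem traceSignChar_pow_two_pow [Finite F] (x : F) (k : ℕ) :
    traceSignChar F (x ^ 2 ^ k) = traceSignChar F x := by
  have htrace := trace_pow_card_pow (ZMod 2) x k
  rw [ZMod.card] at htrace
  rw [traceSignChar_apply, traceSignChar_apply, htrace]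

variable [Fintype F]

/-- The Weil sum `∑ x, (-1) ^ Tr (a x ^ (2 ^ m + 1))`. -/
noncomputable def weilSum (m : ℕ) (a : F) : ℤ :=
  ∑ x, traceSignChar F (a * x ^ (2 ^ m + 1))

theorem weilSum_zero (m : ℕ) : weilSum m (0 : F) = Fintype.card F := by
  simp [weilSum]

theorem weilSum_pow (m : ℕ) {y : F} (hy : y ≠ 0) :
    weilSum m (y ^ (2 ^ m + 1)) = weilSum m (1 : F) :=
  Fintype.sum_equiv (Equiv.mulLeft₀ y hy) _ _ fun x => by simp [mul_pow]

theorem sum_traceSignChar_polar [DecidableEq F] (m : ℕ) (a y : F) :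
    ∑ x, traceSignChar F (a * (x ^ 2 ^ m * y + x * y ^ 2 ^ m)) =
      if (a * y ^ (2 ^ m + 1)) ^ 2 ^ m = a * y ^ (2 ^ m + 1) then (Fintype.card F : ℤ) else 0 := by
  have : CharP F 2 := charP_of_injective_algebraMap' (ZMod 2) 2
  set b := a * y + (a * y ^ 2 ^ m) ^ 2 ^ m with hb
  have polar_eq (x : F) : traceSignChar F (a * (x ^ 2 ^ m * y + x * y ^ 2 ^ m)) =
      traceSignChar F (iterateFrobeniusEquiv F 2 m x * b) := by
    rw [mul_add, AddChar.map_add_eq_mul, ← traceSignChar_pow_two_pow (a * (x * y ^ 2 ^ m)) m,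
      ← AddChar.map_add_eq_mul, iterateFrobeniusEquiv_def, hb]
    congr 1
    ring
  have b_eq_zero_iff : b = 0 ↔ (a * y ^ (2 ^ m + 1)) ^ 2 ^ m = a * y ^ (2 ^ m + 1) := by
    rcases eq_or_ne y 0 with rfl | hy
    · simp [hb]
    · have hmul : b * y ^ 2 ^ m = a * y ^ (2 ^ m + 1) + (a * y ^ (2 ^ m + 1)) ^ 2 ^ m := by
        rw [hb]
        ring
      rw [← mul_eq_zero_iff_right (pow_ne_zero (2 ^ m) hy), hmul, CharTwo.add_eq_zero, eq_comm]
  simp only [polar_eq]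
  rw [(iterateFrobeniusEquiv F 2 m).bijective.sum_comp fun x => traceSignChar F (x * b),
    AddChar.sum_mulShift b traceSignChar_isPrimitive]
  simp only [b_eq_zero_iff, Nat.cast_ite, Nat.cast_zero]

theorem weilSum_sq [DecidableEq F] (m : ℕ) (a : F) :
    weilSum m a ^ 2 = Fintype.card F *
      ∑ y with (a * y ^ (2 ^ m + 1)) ^ 2 ^ m = a * y ^ (2 ^ m + 1),
        traceSignChar F (a * y ^ (2 ^ m + 1)) := by
  have : CharP F 2 := charP_of_injective_algebraMap' (ZMod 2) 2
  have polarization (x y : F) : a * x ^ (2 ^ m + 1) + a * (x + y) ^ (2 ^ m + 1) =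
      a * y ^ (2 ^ m + 1) + a * (x ^ 2 ^ m * y + x * y ^ 2 ^ m) := by
    rw [pow_succ (x + y), add_pow_char_pow]
    linear_combination a * x ^ (2 ^ m + 1) * CharTwo.two_eq_zero (R := F)
  calc weilSum m a ^ 2
      = ∑ x, ∑ y, traceSignChar F (a * x ^ (2 ^ m + 1)) *
          traceSignChar F (a * y ^ (2 ^ m + 1)) := by rw [weilSum, sq, sum_mul_sum]
    _ = ∑ x, ∑ y, traceSignChar F (a * x ^ (2 ^ m + 1)) *
          traceSignChar F (a * (x + y) ^ (2 ^ m + 1)) :=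
        sum_congr rfl fun x _ => (Equiv.sum_comp (Equiv.addLeft x) _).symm
    _ = ∑ y, traceSignChar F (a * y ^ (2 ^ m + 1)) *
          ∑ x, traceSignChar F (a * (x ^ 2 ^ m * y + x * y ^ 2 ^ m)) := by
        simp only [← AddChar.map_add_eq_mul, polarization, mul_sum]
        exact sum_comm
    _ = _ := by
        simp only [sum_traceSignChar_polar, mul_ite, mul_zero, ← sum_filter, ← sum_mul]
        exact mul_comm _ _

variable {m l : ℕ}

theorem traceSignChar_eq_one_of_pow_eq_self (hF : Fintype.card F = 2 ^ (2 * l * m)) {z : F}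
    (hz : z ^ 2 ^ m = z) : traceSignChar F z = 1 := by
  have hrank : Module.finrank (ZMod 2) F = m * l + m * l := by
    have hcard := Module.card_eq_pow_finrank (K := ZMod 2) (V := F)
    rw [hF, ZMod.card] at hcard
    rw [← Nat.pow_right_injective le_rfl hcard]
    ring
  have hz_iterate : z ^ Fintype.card (ZMod 2) ^ (m * l) = z := by
    rw [ZMod.card, pow_mul]
    exact (congrFun (pow_iterate (2 ^ m) l) z).symm.trans (Function.iterate_fixed hz l)
  rw [traceSignChar_apply, trace_eq_zero_of_pow_card_pow_eq_self (ZMod 2) hrank hz_iterate,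
    ZMod.val_zero, pow_zero]

theorem weilSum_sq_eq_card_mul_card [DecidableEq F]
    (hF : Fintype.card F = 2 ^ (2 * l * m)) (a : F) :
    weilSum m a ^ 2 = Fintype.card F *
      #{y | (a * y ^ (2 ^ m + 1)) ^ 2 ^ m = a * y ^ (2 ^ m + 1)} := by
  rw [weilSum_sq, sum_congr rfl fun y hy =>
    traceSignChar_eq_one_of_pow_eq_self hF (mem_filter.1 hy).2, card_eq_sum_ones, Nat.cast_sum,
    Nat.cast_one]

theorem weilSum_modEq_one (hm : 2 ^ m + 1 ∣ Nat.card Fˣ) (a : F) :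
    weilSum m a ≡ 1 [ZMOD 2 ^ m + 1] := by
  have hdvd := dvd_sum_comp_pow_sub hm fun x => traceSignChar F (a * x)
  exact (Int.modEq_iff_dvd.2 (by simpa [weilSum] using hdvd)).symm

theorem weilSum_eq_of_card_filter [DecidableEq F] (hF : Fintype.card F = 2 ^ (2 * l * m)) {a : F}
    {j : ℕ}
    (hj : #{y | (a * y ^ (2 ^ m + 1)) ^ 2 ^ m = a * y ^ (2 ^ m + 1)} = (2 ^ m) ^ (2 * j)) :
    weilSum m a = (-2 ^ m) ^ (l + j) := by
  have hm : m ≠ 0 := by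
    rintro rfl
    exact Fintype.one_lt_card.ne' (hF.trans (by simp))
  have not_dvd_two : ¬ (2 ^ m + 1 : ℤ) ∣ 2 := fun hdvd => by
    have hle := Int.le_of_dvd two_pos hdvd
    have hlt : (1 : ℤ) < 2 ^ m := one_lt_pow₀ one_lt_two hm
    lia
  have neg_two_pow_modEq : (-2 ^ m : ℤ) ≡ 1 [ZMOD 2 ^ m + 1] :=
    Int.modEq_iff_dvd.2 (by rw [sub_neg_eq_add, add_comm])
  have hdvd_card := dvd_of_mul_left_dvd (two_pow_sub_one_mul_two_pow_add_one_dvd_card_units hF)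
  refine int_eq_of_sq_eq_sq_of_modEq_one not_dvd_two (weilSum_modEq_one hdvd_card a)
    (by simpa using neg_two_pow_modEq.pow (l + j)) ?_
  rw [weilSum_sq_eq_card_mul_card hF, hF, hj, pow_right_comm (-2 ^ m : ℤ), neg_sq]
  push_cast
  ring

theorem weilSum_one (hF : Fintype.card F = 2 ^ (2 * l * m)) :
    weilSum m (1 : F) = (-2 ^ m) ^ (l + 1) := by
  classical
  apply weilSum_eq_of_card_filter hF
  have exponent_eq : (2 ^ m - 1) * (2 ^ m + 1) + 1 = (2 ^ m) ^ 2 := by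
    rw [mul_comm, ← Nat.sq_sub_sq, one_pow, Nat.sub_add_cancel (by simp [Nat.one_le_pow])]
  have fixed_iff (y : F) : (1 * y ^ (2 ^ m + 1)) ^ 2 ^ m = 1 * y ^ (2 ^ m + 1) ↔
      y ^ ((2 ^ m - 1) * (2 ^ m + 1) + 1) = y := by
    rcases eq_or_ne y 0 with rfl | hy
    · simp
    · rw [one_mul, exponent_eq,
        ← mul_left_inj' (a := y ^ (2 ^ m) ^ 2) (pow_ne_zero (2 ^ m) hy), ← pow_mul y, ← pow_add y,
        ← pow_succ' y, sq, add_one_mul]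
  simp only [fixed_iff]
  rw [card_filter_pow_succ_eq_self (two_pow_sub_one_mul_two_pow_add_one_dvd_card_units hF),
    exponent_eq]

theorem weilSum_of_not_pow (hF : Fintype.card F = 2 ^ (2 * l * m)) {a : F}
    (ha : ¬ ∃ y : F, a = y ^ (2 ^ m + 1)) : weilSum m a = (-2 ^ m) ^ l := by
  classical
  refine weilSum_eq_of_card_filter (j := 0) hF ?_
  suffices h : ∀ y : F, (a * y ^ (2 ^ m + 1)) ^ 2 ^ m = a * y ^ (2 ^ m + 1) ↔ y = 0 by
    rw [mul_zero, pow_zero, card_eq_one]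
    exact ⟨0, by ext y; simp [h]⟩
  refine fun y => ⟨fun hfixed => ?_, by rintro rfl; simp⟩
  by_contra hy
  obtain ⟨w, hw⟩ := exists_pow_eq_of_pow_succ_eq_self (z := a * y ^ (2 ^ m + 1))
    (two_pow_sub_one_mul_two_pow_add_one_dvd_card_units hF)
    (by rwa [Nat.sub_add_cancel Nat.one_le_two_pow])
  exact ha ⟨w / y, by rw [div_pow, hw, mul_div_cancel_right₀ _ (pow_ne_zero _ hy)]⟩

end WeilSum

theorem character_sum_values_general {F : Type*} [Field F] [Fintype F] [Algebra (ZMod 2) F]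
    {m l : ℕ} (hF : Fintype.card F = 2 ^ (2 * l * m)) (a : F) :
    (a = 0 →
      ∑ x : F, (-1 : ℤ) ^ (Algebra.trace (ZMod 2) F (a * x ^ (2 ^ m + 1))).val =
        2 ^ (2 * l * m)) ∧
    ((∃ y : F, y ≠ 0 ∧ a = y ^ (2 ^ m + 1)) →
      ∑ x : F, (-1 : ℤ) ^ (Algebra.trace (ZMod 2) F (a * x ^ (2 ^ m + 1))).val =
        (-2 ^ m) ^ (l + 1)) ∧
    ((¬ ∃ y : F, a = y ^ (2 ^ m + 1)) →
      ∑ x : F, (-1 : ℤ) ^ (Algebra.trace (ZMod 2) F (a * x ^ (2 ^ m + 1))).val =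
        (-2 ^ m) ^ l) := by
  refine ⟨?_, ?_, weilSum_of_not_pow hF⟩
  · rintro rfl
    exact (weilSum_zero m).trans (by simp [hF])
  · rintro ⟨y, hy, rfl⟩
    exact (weilSum_pow m hy).trans (weilSum_one hF)

/-- For `q = 2^(2lm)` with `m ≥ 1` and `l ≥ 2` even, the character sum
`∑_{x ∈ GF(q)} (-1)^{Tr(a x^(2^m+1))}` equals `2^(2lm)` if `a = 0`,
`-2^((l+1)m)` if `a` is a nonzero `(2^m+1)`-th power, and `2^(lm)` if `a` is
not a `(2^m+1)`-th power. -/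
theorem character_sum_values (m l : ℕ) (hm : 1 ≤ m) (hl : 2 ≤ l) (hle : Even l)
    (a : GaloisField 2 (2 * l * m)) :
    (a = 0 →
      (∑ x : GaloisField 2 (2 * l * m),
        (-1 : ℤ) ^ (Algebra.trace (ZMod 2) (GaloisField 2 (2 * l * m))
          (a * x ^ (2 ^ m + 1))).val) = 2 ^ (2 * l * m)) ∧
    ((∃ y : GaloisField 2 (2 * l * m), y ≠ 0 ∧ a = y ^ (2 ^ m + 1)) →
      (∑ x : GaloisField 2 (2 * l * m),
        (-1 : ℤ) ^ (Algebra.trace (ZMod 2) (GaloisField 2 (2 * l * m))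
          (a * x ^ (2 ^ m + 1))).val) = -2 ^ ((l + 1) * m)) ∧
    ((¬ ∃ y : GaloisField 2 (2 * l * m), a = y ^ (2 ^ m + 1)) →
      (∑ x : GaloisField 2 (2 * l * m),
        (-1 : ℤ) ^ (Algebra.trace (ZMod 2) (GaloisField 2 (2 * l * m))
          (a * x ^ (2 ^ m + 1))).val) = 2 ^ (l * m)) := by
  have hcard := Nat.card_eq_fintype_card.symm.trans (GaloisField.card 2 (2 * l * m) (by positivity))
  simpa only [hle.neg_pow, hle.add_one.neg_pow, ← pow_mul, mul_comm m] using
    character_sum_values_general hcard a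
end

section
/- Let m ≥ 1, let l ≥ 2 be an even integer, let 0 ≤ s ≤ 2m-1, and set d = (2^{2lm}-1)/(2^m+1) + 2^s; assume gcd(d, 2^{2lm}-1) = 1. Then for every z in GF(2^{2lm}), the integer S_d(z) is divisible by 2^{lm}. -/
/-- The Weil sum `S_d(z) = ∑_{x ∈ GF(2^n)} (-1)^{Tr(zx + x^d)}`, where `Tr` is
the absolute trace from `GF(2^n)` to `GF(2)`. -/
noncomputable def binaryWeilSum (n d : ℕ) (z : GaloisField 2 n) : ℤ :=
  ∑ x : GaloisField 2 n,
    (-1 : ℤ) ^ (Algebra.trace (ZMod 2) (GaloisField 2 n) (z * x + x ^ d)).val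

/-!
Substitute `x = g * y ^ (2 ^ m + 1)` and sum over all `y` and all units `g`: every `x` is hit
`q - 1` times, `q = 2 ^ (2 * l * m)`, so this multiplies the Weil sum by the odd number `q - 1`.
As `2 ^ m + 1` divides `q - 1`, the power `x ^ d` becomes `g ^ d * (y ^ (2 ^ m + 1)) ^ 2 ^ s`.
For fixed `g` the inner sum is therefore `∑ y, χ (y ^ (2 ^ m + 1))` with `χ` an additive character.
Since `y ↦ y ^ (2 ^ m + 1) = y ^ 2 ^ m * y` is a quadratic map over the prime field, squaring such
a sum and shifting one variable leaves sums of additive characters, each of them `0` or `q`.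
Hence `q` divides its square, and `2 ^ (l * m)` divides the sum itself.
-/

theorem card_dvd_sum_addChar {A R : Type*} [AddGroup A] [Fintype A] [CommSemiring R] [IsDomain R]
    (ψ : AddChar A R) : (Fintype.card A : R) ∣ ∑ x, ψ x := by
  classical
  rw [AddChar.sum_eq_ite]
  split_ifs
  · exact dvd_rfl
  · exact dvd_zero _

theorem card_dvd_sum_mul_sum_neg_quadraticMap {S A B R : Type*} [CommRing S]
    [AddCommGroup A] [Fintype A] [Module S A] [AddCommGroup B] [Module S B]
    [CommSemiring R] [IsDomain R] (ψ : AddChar B R) (Q : QuadraticMap S A B) :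
    (Fintype.card A : R) ∣ (∑ x, ψ (Q x)) * ∑ x, ψ (-Q x) := by
  let polarChar (w : A) : AddChar A R :=
    ψ.compAddMonoidHom (Q.polarBilin.flip w).toAddMonoidHom
  have hshift (w x : A) : ψ (Q (x + w)) * ψ (-Q x) = ψ (Q w) * polarChar w x := by
    change _ = ψ (Q w) * ψ (QuadraticMap.polar Q x w)
    rw [← AddChar.map_add_eq_mul, ← AddChar.map_add_eq_mul, QuadraticMap.map_add Q]
    congr 1
    abel
  have hsum : (∑ x, ψ (Q x)) * ∑ x, ψ (-Q x) = ∑ w, ψ (Q w) * ∑ x, polarChar w x := by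
    calc (∑ x, ψ (Q x)) * ∑ x, ψ (-Q x)
        = ∑ x, ∑ w, ψ (Q w) * ψ (-Q x) := by rw [Finset.sum_mul_sum, Finset.sum_comm]
      _ = ∑ x, ∑ w, ψ (Q (x + w)) * ψ (-Q x) :=
          Finset.sum_congr rfl fun x _ =>
            (Equiv.sum_comp (Equiv.addLeft x) fun w => ψ (Q w) * ψ (-Q x)).symm
      _ = ∑ w, ψ (Q w) * ∑ x, polarChar w x := by
          rw [Finset.sum_comm]
          simp only [hshift, Finset.mul_sum]
  rw [hsum]
  exact Finset.dvd_sum fun w _ => (card_dvd_sum_addChar (polarChar w)).mul_left _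

/-- The map `x ↦ x ^ (p ^ m + 1)` in exponential characteristic `p`. It is encoded over `ℤ` so
that no algebra structure over the prime field has to be chosen. -/
def frobeniusNormForm (F : Type*) [CommRing F] (p m : ℕ) [ExpChar F p] : QuadraticMap ℤ F F :=
  QuadraticMap.linMulLin (iterateFrobenius F p m).toAddMonoidHom.toIntLinearMap LinearMap.id

theorem frobeniusNormForm_apply {F : Type*} [CommRing F] {p : ℕ} [ExpChar F p] (m : ℕ) (x : F) :
    frobeniusNormForm F p m x = x ^ (p ^ m + 1) :=
  (pow_succ x (p ^ m)).symm

theorem card_dvd_sq_sum_addChar_pow {F R : Type*} [CommRing F] [Fintype F] [CharP F 2]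
    [CommSemiring R] [IsDomain R] (χ : AddChar F R) (m : ℕ) :
    (Fintype.card F : R) ∣ (∑ y, χ (y ^ (2 ^ m + 1))) ^ 2 := by
  simpa only [frobeniusNormForm_apply, CharTwo.neg_eq, ← sq] using
    card_dvd_sum_mul_sum_neg_quadraticMap χ (frobeniusNormForm F 2 m)

theorem sum_units_sum_mul_eq_card_nsmul {G₀ M : Type*} [GroupWithZero G₀] [Fintype G₀]
    [DecidableEq G₀] [AddCommMonoid M] (φ : G₀ → M) {h : G₀ → G₀} (hh : ∀ y, h y = 0 ↔ y = 0) :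
    ∑ g : G₀ˣ, ∑ y, φ (g * h y) = Fintype.card G₀ˣ • ∑ x, φ x := by
  have hsplit (ψ : G₀ → M) : ∑ x, ψ x = ψ 0 + ∑ u : G₀ˣ, ψ u := by
    rw [Fintype.sum_eq_add_sum_subtype_ne ψ 0, ← unitsEquivNeZero.sum_comp]
    rfl
  have horbit (u : G₀ˣ) : ∑ g : G₀ˣ, φ (g * h u) = ∑ g : G₀ˣ, φ g :=
    Equiv.sum_comp (Equiv.mulRight (Units.mk0 (h u) (mt (hh u).mp u.ne_zero))) fun g : G₀ˣ => φ g
  rw [Finset.sum_comm, hsplit, hsplit φ]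
  simp [horbit, (hh 0).mpr rfl]

theorem pow_pow_card_sub_one_div_add {K : Type*} [GroupWithZero K] [Fintype K] {k e : ℕ}
    (hk : k ∣ Fintype.card K - 1) (he : e ≠ 0) (y : K) :
    (y ^ k) ^ ((Fintype.card K - 1) / k + e) = (y ^ k) ^ e := by
  rw [pow_add, ← pow_mul, Nat.mul_div_cancel' hk]
  rcases eq_or_ne y 0 with rfl | hy
  · have hcard : Fintype.card K - 1 ≠ 0 := (Nat.sub_pos_of_lt Fintype.one_lt_card).ne'
    have hk₀ : k ≠ 0 := ne_zero_of_dvd_ne_zero hcard hk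
    simp [hk₀, he]
  · rw [FiniteField.pow_card_sub_one_eq_one y hy, one_mul]

theorem isCoprime_sub_one_of_dvd {R : Type*} [CommRing R] {r q : R} (h : r ∣ q) :
    IsCoprime r (q - 1) := by
  obtain ⟨c, rfl⟩ := h
  exact ⟨c, -1, by ring⟩

theorem dvd_sum_addChar_mul_add_pow {F R : Type*} [Field F] [Fintype F] [CharP F 2]
    [CommRing R] [IsDomain R] [IsIntegrallyClosed R] (ψ : AddChar F R) {m : ℕ} {r : R}
    (hr : r ^ 2 = Fintype.card F) (hdvd : 2 ^ m + 1 ∣ Fintype.card F - 1) (s : ℕ) (z : F) :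
    r ∣ ∑ x, ψ (z * x + x ^ ((Fintype.card F - 1) / (2 ^ m + 1) + 2 ^ s)) := by
  classical
  set d := (Fintype.card F - 1) / (2 ^ m + 1) + 2 ^ s
  let χ (g : F) : AddChar F R := ψ.compAddMonoidHom <|
    AddMonoidHom.mulLeft (z * g) +
      (AddMonoidHom.mulLeft (g ^ d)).comp (iterateFrobenius F 2 s).toAddMonoidHom
  have hχ (g y : F) : ψ (z * (g * y ^ (2 ^ m + 1)) + (g * y ^ (2 ^ m + 1)) ^ d)
      = χ g (y ^ (2 ^ m + 1)) := by
    rw [← mul_assoc, mul_pow, pow_pow_card_sub_one_div_add hdvd (pow_ne_zero s two_ne_zero)]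
    rfl
  have hinner (g : F) : r ∣ ∑ y, χ g (y ^ (2 ^ m + 1)) := by
    rw [← IsIntegrallyClosed.pow_dvd_pow_iff two_ne_zero, hr]
    exact card_dvd_sq_sum_addChar_pow (χ g) m
  have hcoprime : IsCoprime r (Fintype.card Fˣ : R) := by
    have h := isCoprime_sub_one_of_dvd (Dvd.intro_left r ((sq r).symm.trans hr))
    rwa [Fintype.card_eq_card_units_add_one (α := F), Nat.cast_add_one, add_sub_cancel_right] at h
  refine hcoprime.dvd_of_dvd_mul_left ?_
  rw [← nsmul_eq_mul, ← sum_units_sum_mul_eq_card_nsmul (fun x => ψ (z * x + x ^ d))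
    (h := (· ^ (2 ^ m + 1))) fun y => pow_eq_zero_iff (Nat.succ_ne_zero _)]
  simp only [hχ]
  exact Finset.dvd_sum fun g _ => hinner g

/-- The character `x ↦ (-1) ^ Tr x` of an algebra over `GF(2)`, valued in `ℤ` like the Weil
sum. -/
noncomputable def signTraceChar (A : Type*) [CommRing A] [Algebra (ZMod 2) A] : AddChar A ℤ :=
  (AddChar.zmodChar 2 (neg_one_sq : (-1 : ℤ) ^ 2 = 1)).compAddMonoidHom
    (Algebra.trace (ZMod 2) A).toAddMonoidHom

theorem binaryWeilSum_eq_sum_signTraceChar (n d : ℕ) (z : GaloisField 2 n) :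
    binaryWeilSum n d z = ∑ x, signTraceChar (GaloisField 2 n) (z * x + x ^ d) :=
  rfl

theorem add_one_dvd_pow_two_mul_sub_one (x l : ℕ) : x + 1 ∣ x ^ (2 * l) - 1 := by
  have hsq : x + 1 ∣ x ^ 2 - 1 := Dvd.intro _ (Nat.sq_sub_sq x 1).symm
  rw [pow_mul]
  exact hsq.trans (Nat.sub_one_dvd_pow_sub_one _ l)

theorem weil_sum_divisible_general (m l s d : ℕ) (hm : 1 ≤ m) (hl : 1 ≤ l)
    (hd : d = (2 ^ (2 * l * m) - 1) / (2 ^ m + 1) + 2 ^ s) (z : GaloisField 2 (2 * l * m)) :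
    (2 ^ (l * m) : ℤ) ∣ binaryWeilSum (2 * l * m) d z := by
  have hn : 2 * l * m ≠ 0 := by positivity
  have hcard : Fintype.card (GaloisField 2 (2 * l * m)) = 2 ^ (2 * l * m) := by
    rw [← Nat.card_eq_fintype_card, GaloisField.card 2 _ hn]
  have hdvd : 2 ^ m + 1 ∣ Fintype.card (GaloisField 2 (2 * l * m)) - 1 := by
    rw [hcard, mul_comm, pow_mul]
    exact add_one_dvd_pow_two_mul_sub_one (2 ^ m) l
  have hsq : ((2 : ℤ) ^ (l * m)) ^ 2 = Fintype.card (GaloisField 2 (2 * l * m)) := by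
    rw [hcard]
    push_cast
    ring
  rw [binaryWeilSum_eq_sum_signTraceChar, hd, ← hcard]
  exact dvd_sum_addChar_mul_add_pow (signTraceChar _) hsq hdvd s z

/-- For `d = (2^(2lm)-1)/(2^m+1) + 2^s` with `l ≥ 2` even and
`gcd(d, 2^(2lm)-1) = 1`, every Weil sum value `S_d(z)` is divisible by `2^(lm)`. -/
theorem weil_sum_divisible (m l s d : ℕ) (hm : 1 ≤ m) (hl : 2 ≤ l) (hle : Even l)
    (hs : s ≤ 2 * m - 1) (hd : d = (2 ^ (2 * l * m) - 1) / (2 ^ m + 1) + 2 ^ s)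
    (hgcd : Nat.gcd d (2 ^ (2 * l * m) - 1) = 1) :
    ∀ z : GaloisField 2 (2 * l * m), (2 ^ (l * m) : ℤ) ∣ binaryWeilSum (2 * l * m) d z :=
  weil_sum_divisible_general m l s d hm (one_le_two.trans hl) hd
end

section
/- Let m ≥ 1, let l ≥ 2 be an even integer, let 0 ≤ s ≤ 2m-1, and set d = (2^{2lm}-1)/(2^m+1) + 2^s; assume gcd(d, 2^{2lm}-1) = 1. Then there exists a nonzero z in GF(2^{2lm}) such that S_d(z) = 0 (equivalently, the cross correlation between a binary m-sequence of period 2^{2lm}-1 and its d-decimation attains the value -1, confirming Helleseth's conjecture for this decimation). -/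
/-!
Let `q = 2 ^ (2lm)` and `P = 2 ^ (lm)`, so that `q = P ^ 2`. For every `a` the square of
`∑ y, (-1) ^ Tr (a * y ^ (2 ^ m + 1))` is divisible by `q`, because the exponent is a quadratic
form over `GF(2)`; hence the sum itself is divisible by `P`. With `N = (q - 1) / (2 ^ m + 1)`,
replacing `x` by `x * u ^ (2 ^ m + 1)` in `x ^ N * x ^ (2 ^ s)` leaves `x ^ N` unchanged, and the
Frobenius invariance of the trace removes the power `2 ^ s`; averaging over the units `u` therefore
expresses `(q - 1) * S_d(z)` through such sums, and `P` divides every `S_d(z)`. Since `x ↦ x ^ d` is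
a permutation, `S_d(0) = 0`, and Parseval's identity says that the squares of the `q - 1` integers
`S_d(z) / P` with `z ≠ 0` add up to `q`. If all were nonzero, one of the squares would exceed `1`,
hence be at least `4`, and the sum would be at least `q + 2`.
-/

open Finset Function

section Counting

theorem exists_eq_zero_of_sum_sq_eq_card_add_one {ι : Type*} {A : Finset ι} {t : ι → ℤ}
    (h : ∑ i ∈ A, t i ^ 2 = #A + 1) : ∃ i ∈ A, t i = 0 := by
  classical
  by_contra! ht
  have one_le_sq (i) (hi : i ∈ A) : 1 ≤ t i ^ 2 :=
    Int.add_one_le_of_lt (sq_pos_of_ne_zero (ht i hi))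
  obtain ⟨j, hj, one_lt_sq⟩ : ∃ j ∈ A, 1 < t j ^ 2 := exists_lt_of_sum_lt (by simp [h])
  have four_le_sq : 2 ^ 2 ≤ t j ^ 2 :=
    sq_le_sq.mpr ((one_lt_sq_iff_one_lt_abs _).mp one_lt_sq)
  have card_erase_le_sum : (#(A.erase j) : ℤ) ≤ ∑ i ∈ A.erase j, t i ^ 2 := by
    simpa using card_nsmul_le_sum (A.erase j) (t · ^ 2) 1 fun i hi ↦
      one_le_sq i (mem_of_mem_erase hi)
  have := add_sum_erase A (t · ^ 2) hj
  have := card_erase_add_one hj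
  omega

theorem sum_sum_mul_units {M ι R : Type*} [Monoid M] [Fintype M] [Fintype ι] [NonAssocSemiring R]
    (f : M → R) (g : ι → Mˣ) :
    ∑ x, ∑ i, f (x * g i) = Fintype.card ι * ∑ x, f x := by
  have sum_mul_unit (i : ι) : ∑ x, f (x * g i) = ∑ x, f x :=
    Equiv.sum_comp (g i).mulRight f
  rw [sum_comm]
  simp [sum_mul_unit]

theorem sum_units_eq_sum_sub {K R : Type*} [GroupWithZero K] [Fintype K] [Fintype Kˣ]
    [AddCommGroup R] (f : K → R) : ∑ u : Kˣ, f u = ∑ x, f x - f 0 := by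
  classical
  rw [Fintype.sum_eq_add_sum_subtype_ne f 0, ← Equiv.sum_comp unitsEquivNeZero]
  simp

theorem pow_bijective_of_coprime_card_sub_one {K : Type*} [GroupWithZero K] [Finite K] {n : ℕ}
    (hn₀ : n ≠ 0) (hn : n.Coprime (Nat.card K - 1)) : Bijective fun x : K ↦ x ^ n := by
  refine Finite.injective_iff_bijective.mp fun x y (hxy : x ^ n = y ^ n) ↦ ?_
  rcases eq_or_ne x 0 with rfl | hx
  · exact (eq_zero_of_pow_eq_zero (n := n) (by simp [← hxy, hn₀])).symm
  have hy : y ≠ 0 := fun hy ↦ hx (eq_zero_of_pow_eq_zero (n := n) (by simp [hxy, hy, hn₀]))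
  lift x to Kˣ using hx.isUnit
  lift y to Kˣ using hy.isUnit
  rw [← Nat.card_units] at hn
  exact congrArg _ (hn.symm.pow_left_bijective.injective (Units.ext (by simpa using hxy)))

end Counting

section WalshTransform

variable {F R : Type*} [CommRing F] [Fintype F] [CommRing R]

/-- The Walsh transform `z ↦ ∑ x, ψ (z * x + f x)` of a function `f` with respect to an additive
character `ψ`. For `ψ x = (-1) ^ Tr x` and `f x = x ^ d` it is the Weil sum `S_d`. -/
def walshTransform (ψ : AddChar F R) (f : F → F) (z : F) : R :=
  ∑ x, ψ (z * x + f x)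

theorem walshTransform_zero_of_bijective [IsDomain R] {ψ : AddChar F R} (hψ : ψ ≠ 1) {f : F → F}
    (hf : Bijective f) : walshTransform ψ f 0 = 0 := by
  simpa [walshTransform, AddChar.sum_eq_zero_of_ne_one hψ] using hf.sum_comp ψ

theorem sum_walshTransform_sq [IsDomain R] [CharP F 2] {ψ : AddChar F R} (hψ : ψ.IsPrimitive)
    (f : F → F) : ∑ z, walshTransform ψ f z ^ 2 = (Fintype.card F : R) ^ 2 := by
  classical
  have map_mul_self (a : F) : ψ a * ψ a = 1 := by
    rw [← AddChar.map_add_eq_mul, CharTwo.add_self_eq_zero, AddChar.map_zero_eq_one]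
  calc ∑ z, walshTransform ψ f z ^ 2
      = ∑ z, ∑ x, ∑ y, ψ (f x) * ψ (f y) * ψ (z * (x + y)) := by
        simp only [walshTransform, sq, sum_mul_sum, ← AddChar.map_add_eq_mul]
        refine sum_congr rfl fun z _ ↦ sum_congr rfl fun x _ ↦ sum_congr rfl fun y _ ↦ ?_
        congr 1
        ring
    _ = ∑ x, ∑ y, ψ (f x) * ψ (f y) * ∑ z, ψ (z * (x + y)) := by
        rw [sum_comm]
        refine sum_congr rfl fun x _ ↦ ?_
        rw [sum_comm]
        simp only [mul_sum]
    _ = ∑ _x : F, (Fintype.card F : R) := by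
        simp [AddChar.sum_mulShift _ hψ, CharTwo.add_eq_zero, map_mul_self]
    _ = (Fintype.card F : R) ^ 2 := by simp [sq]

theorem exists_walshTransform_eq_zero [Nontrivial F] [CharP F 2] {ψ : AddChar F ℤ}
    (hψ : ψ.IsPrimitive) {f : F → F} (hf : Bijective f) {P : ℕ} (hP : Fintype.card F = P ^ 2)
    (hdvd : ∀ z, (P : ℤ) ∣ walshTransform ψ f z) : ∃ z ≠ 0, walshTransform ψ f z = 0 := by
  classical
  choose t ht using hdvd
  have hψ₁ : ψ ≠ 1 := by simpa using hψ one_ne_zero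
  have hP₀ : (P : ℤ) ≠ 0 := by
    rintro hP₀
    simp_all
  have t_zero : t 0 = 0 := by
    have mul_t_zero := ht 0
    rw [walshTransform_zero_of_bijective hψ₁ hf, zero_eq_mul] at mul_t_zero
    exact mul_t_zero.resolve_left hP₀
  have sum_sq : ∑ z, t z ^ 2 = Fintype.card F := by
    have parseval := sum_walshTransform_sq hψ f
    simp only [ht, mul_pow, ← mul_sum, hP, Nat.cast_pow, sq ((P : ℤ) ^ 2)] at parseval
    simpa [hP] using mul_left_cancel₀ (pow_ne_zero 2 hP₀) parseval
  have sum_erase_sq : ∑ z ∈ univ.erase 0, t z ^ 2 = #(univ.erase (0 : F)) + 1 := by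
    rw [sum_erase _ (by simp [t_zero]), sum_sq, ← card_univ,
      ← card_erase_add_one (mem_univ (0 : F)), Nat.cast_succ]
  obtain ⟨z, hz, t_eq_zero⟩ := exists_eq_zero_of_sum_sq_eq_card_add_one sum_erase_sq
  exact ⟨z, ne_of_mem_erase hz, by simp [ht, t_eq_zero]⟩

end WalshTransform

section QuadraticSums

variable {A R : Type*} [CommRing A] [CharP A 2] [CommRing R] [IsDomain R]

theorem card_dvd_sq_sum_addChar_of_map_add {G : Type*} [AddGroup G] [Fintype G] (ψ : AddChar A R)
    {Q : G → A} {B : G → G →+ A} (hQ : ∀ h y, Q (h + y) = Q h + B h y + Q y) :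
    (Fintype.card G : R) ∣ (∑ y, ψ (Q y)) ^ 2 := by
  classical
  have sq_eq : (∑ y, ψ (Q y)) ^ 2 = ∑ h, ψ (Q h) * ∑ y, ψ (B h y) := by
    calc (∑ y, ψ (Q y)) ^ 2
        = ∑ y, ∑ x, ψ (Q y) * ψ (Q x) := by rw [sq, sum_mul_sum]
      _ = ∑ y, ∑ h, ψ (Q y) * ψ (Q (h + y)) := sum_congr rfl fun y _ ↦
          (Equiv.sum_comp (Equiv.addRight y) fun x ↦ ψ (Q y) * ψ (Q x)).symm
      _ = ∑ y, ∑ h, ψ (Q h) * ψ (B h y) := by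
          refine sum_congr rfl fun y _ ↦ sum_congr rfl fun h _ ↦ ?_
          rw [← AddChar.map_add_eq_mul, ← AddChar.map_add_eq_mul, hQ, add_comm (Q y),
            CharTwo.add_cancel_right]
      _ = ∑ h, ψ (Q h) * ∑ y, ψ (B h y) := by
          rw [sum_comm]
          simp only [mul_sum]
  rw [sq_eq]
  refine dvd_sum fun h _ ↦ Dvd.dvd.mul_left ?_ _
  change _ ∣ ∑ y, ψ.compAddMonoidHom (B h) y
  rw [AddChar.sum_eq_ite]
  split_ifs <;> simp

theorem card_dvd_sq_sum_addChar_mul_pow [Fintype A] (ψ : AddChar A R) (m : ℕ) (a : A) :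
    (Fintype.card A : R) ∣ (∑ y, ψ (a * y ^ (2 ^ m + 1))) ^ 2 := by
  let B (h : A) : A →+ A := .mk' (fun y ↦ a * (h ^ 2 ^ m * y + h * y ^ 2 ^ m)) fun x y ↦ by
    rw [add_pow_char_pow]
    ring
  refine card_dvd_sq_sum_addChar_of_map_add ψ (B := B) fun h y ↦ ?_
  simp only [B, AddMonoidHom.mk'_apply, pow_succ _ (2 ^ m), add_pow_char_pow]
  ring

end QuadraticSums

section TraceCharacter

variable (F : Type*) [Field F] [Algebra (ZMod 2) F]

/-- The canonical additive character `x ↦ (-1) ^ Tr x` of a finite field of characteristic two, for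
which Weil sums are Walsh transforms of power maps. The `GF(2)`-algebra structure stands for the
characteristic; for infinite-dimensional `F` Mathlib's trace, hence the exponent, is zero. -/
noncomputable def traceChar : AddChar F ℤ :=
  (AddChar.zmodChar 2 (neg_one_sq (R := ℤ))).compAddMonoidHom
    (Algebra.trace (ZMod 2) F).toAddMonoidHom

variable {F}

theorem traceChar_apply (x : F) :
    traceChar F x = (-1 : ℤ) ^ (Algebra.trace (ZMod 2) F x).val := rfl

variable [Finite F]

theorem traceChar_isPrimitive : (traceChar F).IsPrimitive := by
  refine .of_ne_one (AddChar.ne_one_iff.mpr ?_)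
  obtain ⟨x, hx⟩ := Algebra.trace_surjective (ZMod 2) F 1
  exact ⟨x, by simp [traceChar_apply, hx, ZMod.val_one]⟩

theorem traceChar_pow_two_pow (x : F) (s : ℕ) : traceChar F (x ^ 2 ^ s) = traceChar F x := by
  induction s with
  | zero => simp
  | succ s ih =>
    have trace_sq := Algebra.trace_eq_of_algEquiv
      (FiniteField.frobeniusAlgEquivOfAlgebraic (ZMod 2) F) (x ^ 2 ^ s)
    rw [FiniteField.frobeniusAlgEquivOfAlgebraic_apply, ZMod.card] at trace_sq
    rw [pow_succ, pow_mul, traceChar_apply, trace_sq, ← traceChar_apply, ih]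

end TraceCharacter

section Divisibility

variable {F : Type*} [Field F] [Fintype F] [Algebra (ZMod 2) F]

theorem exists_traceChar_mul_pow_eq {e N : ℕ} (hN : e * N = Fintype.card F - 1) (s : ℕ) (z x : F) :
    ∃ a, ∀ u : Fˣ, traceChar F (z * (x * u ^ e) + (x * u ^ e) ^ (N + 2 ^ s)) =
      traceChar F (a * u ^ e) := by
  have : CharP F 2 := charP_of_injective_algebraMap' (ZMod 2) 2
  obtain ⟨v, hv⟩ : ∃ v : F, v ^ 2 ^ s = x ^ N := (bijective_iterateFrobenius F 2 s).surjective _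
  refine ⟨(z + v) * x, fun u ↦ ?_⟩
  have u_pow : (u : F) ^ (e * N) = 1 := by rw [hN, FiniteField.pow_card_sub_one_eq_one _ u.ne_zero]
  have pow_eq : (x * (u : F) ^ e) ^ (N + 2 ^ s) = (v * (x * (u : F) ^ e)) ^ 2 ^ s := by
    rw [mul_pow v, hv, pow_add, mul_pow x _ N, ← pow_mul, u_pow, mul_one]
  rw [pow_eq, AddChar.map_add_eq_mul, traceChar_pow_two_pow, ← AddChar.map_add_eq_mul]
  congr 1
  ring

theorem dvd_walshTransform_pow {e N : ℕ} (hN : e * N = Fintype.card F - 1) {k : ℤ}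
    (hk : k ∣ Fintype.card F) (hdvd : ∀ a : F, k ∣ ∑ y, traceChar F (a * y ^ e)) (s : ℕ) (z : F) :
    k ∣ walshTransform (traceChar F) (· ^ (N + 2 ^ s)) z := by
  classical
  have he : e ≠ 0 := by
    rintro rfl
    have := Fintype.one_lt_card (α := F)
    omega
  choose a ha using exists_traceChar_mul_pow_eq hN s z
  have average : Fintype.card Fˣ * walshTransform (traceChar F) (· ^ (N + 2 ^ s)) z =
      ∑ x, ∑ y, traceChar F (a x * y ^ e) - Fintype.card F := by
    calc Fintype.card Fˣ * walshTransform (traceChar F) (· ^ (N + 2 ^ s)) z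
        = ∑ x, ∑ u : Fˣ, traceChar F (z * (x * u ^ e) + (x * u ^ e) ^ (N + 2 ^ s)) := by
          simpa [walshTransform] using (sum_sum_mul_units
            (fun x ↦ traceChar F (z * x + x ^ (N + 2 ^ s))) fun u : Fˣ ↦ u ^ e).symm
      _ = ∑ x, (∑ y, traceChar F (a x * y ^ e) - 1) := sum_congr rfl fun x _ ↦ by
          simp [ha, sum_units_eq_sum_sub fun y ↦ traceChar F (a x * y ^ e), he]
      _ = ∑ x, ∑ y, traceChar F (a x * y ^ e) - Fintype.card F := by simp
  have coprime : IsCoprime k (Fintype.card Fˣ) := by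
    rw [Fintype.card_units, Nat.cast_pred Fintype.card_pos]
    obtain ⟨c, hc⟩ := hk
    exact ⟨c, -1, by rw [hc]; ring⟩
  refine coprime.dvd_of_dvd_mul_left ?_
  rw [average]
  exact dvd_sub (dvd_sum fun x _ ↦ hdvd (a x)) hk

theorem sqrt_card_dvd_walshTransform_pow {m N P : ℕ} (hP : Fintype.card F = P ^ 2)
    (hN : (2 ^ m + 1) * N = Fintype.card F - 1) (s : ℕ) (z : F) :
    (P : ℤ) ∣ walshTransform (traceChar F) (· ^ (N + 2 ^ s)) z := by
  have : CharP F 2 := charP_of_injective_algebraMap' (ZMod 2) 2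
  refine dvd_walshTransform_pow hN (by simp [hP, sq]) (fun a ↦ ?_) s z
  rw [← Int.pow_dvd_pow_iff two_ne_zero, ← Nat.cast_pow, ← hP]
  exact card_dvd_sq_sum_addChar_mul_pow _ m a

end Divisibility

theorem add_one_dvd_pow_sub_one {n : ℕ} (hn : Even n) (a : ℕ) : a + 1 ∣ a ^ n - 1 := by
  obtain ⟨k, rfl⟩ := hn.two_dvd
  have dvd_sq_sub_one : a + 1 ∣ a ^ 2 - 1 := ⟨a - 1, by rw [← Nat.sq_sub_sq, one_pow]⟩
  exact dvd_sq_sub_one.trans (Nat.pow_sub_one_dvd_pow_sub_one a (dvd_mul_right 2 k))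

theorem weil_sum_attains_zero_general {F : Type*} [Field F] [Fintype F] [Algebra (ZMod 2) F]
    {m l s d : ℕ} (hF : Fintype.card F = 2 ^ (2 * l * m))
    (hd : d = (2 ^ (2 * l * m) - 1) / (2 ^ m + 1) + 2 ^ s)
    (hgcd : Nat.gcd d (2 ^ (2 * l * m) - 1) = 1) :
    ∃ z ≠ 0, walshTransform (traceChar F) (· ^ d) z = 0 := by
  have : CharP F 2 := charP_of_injective_algebraMap' (ZMod 2) 2
  have card_eq_sq : Fintype.card F = (2 ^ (l * m)) ^ 2 := by rw [hF]; ring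
  have hd₀ : d ≠ 0 := by rw [hd]; positivity
  have pow_bijective : Bijective fun x : F ↦ x ^ d :=
    pow_bijective_of_coprime_card_sub_one hd₀ (by rwa [Nat.card_eq_fintype_card, hF])
  refine exists_walshTransform_eq_zero traceChar_isPrimitive pow_bijective card_eq_sq fun z ↦ ?_
  rw [hd]
  refine sqrt_card_dvd_walshTransform_pow (m := m) card_eq_sq ?_ s z
  have two_pow_add_one_dvd : 2 ^ m + 1 ∣ 2 ^ (2 * l * m) - 1 := by
    rw [mul_comm, pow_mul]
    exact add_one_dvd_pow_sub_one (even_two_mul l) (2 ^ m)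
  rw [hF, Nat.mul_div_cancel' two_pow_add_one_dvd]

/-- Helleseth's conjecture holds for `d = (2^(2lm)-1)/(2^m+1) + 2^s` with `l ≥ 2`
even: there is a nonzero `z` with `S_d(z) = 0`. -/
theorem weil_sum_attains_zero (m l s d : ℕ) (hm : 1 ≤ m) (hl : 2 ≤ l) (hle : Even l)
    (hs : s ≤ 2 * m - 1) (hd : d = (2 ^ (2 * l * m) - 1) / (2 ^ m + 1) + 2 ^ s)
    (hgcd : Nat.gcd d (2 ^ (2 * l * m) - 1) = 1) :
    ∃ z : GaloisField 2 (2 * l * m), z ≠ 0 ∧ binaryWeilSum (2 * l * m) d z = 0 :=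
  weil_sum_attains_zero_general
    (by rw [← Nat.card_eq_fintype_card, GaloisField.card 2 _ (by positivity)]) hd hgcd
end
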